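/- arXiv:1403.7033 — 3 statements merged into one kernel-verified Lean document; each statement's English description precedes it below -/
import Mathlib

section
/- (Subexponential Bohnenblust–Hille constants.) For every ε > 0 there exists κ > 0 such that for all m, N ≥ 1 and every m-homogeneous polynomial P(z) = ∑_{|α|=m} c_α z^α in N complex variables, (∑_{|α|=m} |c_α|^{2m/(m+1)})^{(m+1)/(2m)} ≤ κ (1+ε)^m · sup_{z ∈ closed unit polydisc of ℂ^N} |P(z)|. -/
open Finset

/-!
Write the polynomial as `z ↦ φ (L z ^ m)`, where `L z = ∑ i, z i • X i` and the linear functional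
`φ` on polynomials sends the monomial `X ^ α` to `c α` divided by its multinomial coefficient;
thus `φ` plays the role of the symmetric `m`-linear form. Fix `k ≤ m`. Blei's interpolation bounds
the `ℓ^(2m/(m+1))` norm of the symmetric array of `φ` by a mixed norm with exponent `2k/(k+1)` in
`k` slots and `2` in the others. In those `m - k` slots, hypercontractivity replaces the `ℓ²` norm
by an average over a grid of roots of unity, at the cost of `2 ^ ((m - k) / k)`. The resulting
`k`-linear forms are treated in the same way, keeping a single slot, and polarization costs a
factor `e` for each of their arguments. For fixed `k` the constant grows like a power of `m` times
`2 ^ (m / k)`, so it suffices to choose `k` with `2 ^ (1 / k) < 1 + ε`.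
-/

namespace BohnenblustHille

open scoped NNReal BigOperators

section WeightedHolder

variable {κ : Type*}

lemma sum_rpow_mul_rpow_le (S : Finset κ) (f g : κ → ℝ≥0) {s t : ℝ} (hs : 0 ≤ s) (ht : 0 ≤ t)
    (hst : s + t = 1) :
    ∑ i ∈ S, f i ^ s * g i ^ t ≤ (∑ i ∈ S, f i) ^ s * (∑ i ∈ S, g i) ^ t := by
  rcases hs.eq_or_lt with rfl | hs
  · simp [show t = 1 by linarith]
  rcases ht.eq_or_lt with rfl | ht
  · simp [show s = 1 by linarith]
  have hconj : Real.HolderConjugate s⁻¹ t⁻¹ :=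
    Real.holderConjugate_iff.2 ⟨(one_lt_inv₀ hs).2 (by linarith), by simpa using hst⟩
  simpa [← NNReal.rpow_mul, hs.ne', ht.ne'] using
    NNReal.inner_le_Lp_mul_Lq S (fun i ↦ f i ^ s) (fun i ↦ g i ^ t) hconj

lemma sum_rpow_mul_rpow_mul_rpow_le (S : Finset κ) (f g h : κ → ℝ≥0) {s t u : ℝ} (hs : 0 ≤ s)
    (ht : 0 ≤ t) (hu : 0 ≤ u) (hstu : s + t + u = 1) :
    ∑ i ∈ S, f i ^ s * g i ^ t * h i ^ u ≤
      (∑ i ∈ S, f i) ^ s * (∑ i ∈ S, g i) ^ t * (∑ i ∈ S, h i) ^ u := by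
  rcases (add_nonneg hs ht).eq_or_lt with hst | hst
  · simp [show s = 0 by linarith, show t = 0 by linarith, show u = 1 by linarith]
  have hs' : s / (s + t) * (s + t) = s := by field_simp
  have ht' : t / (s + t) * (s + t) = t := by field_simp
  have hfg := sum_rpow_mul_rpow_le S f g (s := s / (s + t)) (t := t / (s + t)) (by positivity)
    (by positivity) (by field_simp)
  calc ∑ i ∈ S, f i ^ s * g i ^ t * h i ^ u
      = ∑ i ∈ S, (f i ^ (s / (s + t)) * g i ^ (t / (s + t))) ^ (s + t) * h i ^ u := by
        simp only [NNReal.mul_rpow, ← NNReal.rpow_mul, hs', ht']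
    _ ≤ (∑ i ∈ S, f i ^ (s / (s + t)) * g i ^ (t / (s + t))) ^ (s + t) * (∑ i ∈ S, h i) ^ u :=
        sum_rpow_mul_rpow_le S _ h hst.le hu hstu
    _ ≤ ((∑ i ∈ S, f i) ^ (s / (s + t)) * (∑ i ∈ S, g i) ^ (t / (s + t))) ^ (s + t) *
          (∑ i ∈ S, h i) ^ u := by gcongr
    _ = _ := by simp only [NNReal.mul_rpow, ← NNReal.rpow_mul, hs', ht']

lemma expect_rpow_mul_rpow_le (S : Finset κ) (f g : κ → ℝ≥0) {s t : ℝ} (hs : 0 ≤ s)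
    (ht : 0 ≤ t) (hst : s + t = 1) :
    𝔼 i ∈ S, f i ^ s * g i ^ t ≤ (𝔼 i ∈ S, f i) ^ s * (𝔼 i ∈ S, g i) ^ t := by
  simp only [expect_eq_sum_div_card, NNReal.div_rpow, div_mul_div_comm]
  rw [← NNReal.rpow_add_of_nonneg _ hs ht, hst, NNReal.rpow_one]
  gcongr
  exact sum_rpow_mul_rpow_le S f g hs ht hst

lemma rpow_sum_rpow_le_sum {κ' : Type*} (S : Finset κ) (T : Finset κ') (f : κ → κ' → ℝ≥0) {q : ℝ}
    (hq : 1 ≤ q) :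
    (∑ i ∈ S, (∑ j ∈ T, f i j) ^ q) ^ (1 / q) ≤ ∑ j ∈ T, (∑ i ∈ S, f i j ^ q) ^ (1 / q) := by
  have h := le_sum_of_subadditive (fun g : κ → ℝ≥0 ↦ (∑ i ∈ S, g i ^ q) ^ (1 / q))
    (by simp [show q ≠ 0 by positivity]) (fun g h ↦ NNReal.Lp_add_le S g h hq) T
    (fun j i ↦ f i j)
  simpa only [Finset.sum_apply] using h

/-- Hölder's inequality interpolates the second moment between the `p`-th and the fourth, and the
fourth is controlled by the second. -/
lemma rpow_expect_sq_le (S : Finset κ) (f : κ → ℝ≥0) {p : ℝ} {C : ℝ≥0} (hp : 0 < p) (hp2 : p ≤ 2)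
    (h : 𝔼 i ∈ S, f i ^ 4 ≤ C * (𝔼 i ∈ S, f i ^ 2) ^ 2) :
    (𝔼 i ∈ S, f i ^ 2) ^ (1 / 2 : ℝ) ≤ C ^ (1 / p - 1 / 2) * (𝔼 i ∈ S, f i ^ p) ^ (1 / p) := by
  set T := 𝔼 i ∈ S, f i ^ 2
  set P := 𝔼 i ∈ S, f i ^ p
  rcases eq_or_ne T 0 with hT | hT
  · simp [hT]
  have h4p : 0 < 4 - p := by linarith
  set s := 2 / (4 - p) with hs
  set t := (2 - p) / (4 - p) with ht
  have hs0 : 0 < s := by positivity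
  have ht0 : 0 ≤ t := div_nonneg (by linarith) h4p.le
  have hholder : T ≤ P ^ s * (C * T ^ 2) ^ t := by
    have hst : p * s + (4 : ℕ) * t = (2 : ℕ) := by rw [hs, ht]; push_cast; field_simp; ring
    calc T = 𝔼 i ∈ S, (f i ^ p) ^ s * (f i ^ 4) ^ t := by
          refine expect_congr rfl fun i _ ↦ ?_
          rw [← NNReal.rpow_natCast, ← NNReal.rpow_natCast, ← NNReal.rpow_mul, ← NNReal.rpow_mul,
            ← NNReal.rpow_add_of_nonneg _ (by positivity) (by positivity), hst]
      _ ≤ P ^ s * (𝔼 i ∈ S, f i ^ 4) ^ t :=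
          expect_rpow_mul_rpow_le S _ _ hs0.le ht0 (by rw [hs, ht]; field_simp; ring)
      _ ≤ P ^ s * (C * T ^ 2) ^ t := by gcongr
  have habsorb : T ^ (1 - 2 * t) ≤ P ^ s * C ^ t := by
    rw [NNReal.rpow_sub hT, NNReal.rpow_one]
    refine div_le_of_le_mul₀ zero_le zero_le (hholder.trans_eq ?_)
    rw [NNReal.mul_rpow, ← NNReal.rpow_ofNat, ← NNReal.rpow_mul, mul_assoc]
  calc T ^ (1 / 2 : ℝ) = (T ^ (1 - 2 * t)) ^ (1 / (p * s)) := by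
        rw [← NNReal.rpow_mul]; congr 1; rw [hs, ht]; field_simp; ring
    _ ≤ (P ^ s * C ^ t) ^ (1 / (p * s)) := by gcongr
    _ = P ^ (1 / p) * C ^ (1 / p - 1 / 2) := by
        rw [NNReal.mul_rpow, ← NNReal.rpow_mul, ← NNReal.rpow_mul]
        congr 2
        · rw [hs]; field_simp
        · rw [hs, ht]; field_simp
    _ = _ := mul_comm _ _

end WeightedHolder

variable {ι : Type*} [Fintype ι]

section Monomials

variable {R : Type*}

/-- The monomial `z ^ α = ∏ i, z i ^ α i` evaluated at a tuple `z`. Taking `z = MvPolynomial.X`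
gives the monomial as a polynomial. -/
def monom [CommMonoid R] (z : ι → R) (α : ι → ℕ) : R := ∏ i, z i ^ α i

lemma monom_add [CommMonoid R] (z : ι → R) (α β : ι → ℕ) :
    monom z (α + β) = monom z α * monom z β := by
  simp only [monom, Pi.add_apply, pow_add, prod_mul_distrib]

lemma monom_single [CommMonoid R] [DecidableEq ι] (z : ι → R) (x : ι) :
    monom z (Pi.single x 1) = z x := by
  simp [monom, Pi.single_apply, pow_ite]

lemma monom_smul {A : Type*} [CommSemiring R] [CommSemiring A] [Algebra R A] (y : ι → R) (X : ι → A)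
    (β : ι → ℕ) : monom (fun i ↦ y i • X i) β = monom y β • monom X β := by
  simp only [monom, smul_pow, prod_smul]

lemma monom_addChar_apply {G : Type*} [AddCommGroup G] (e : ι → AddChar G ℂ) (α : ι → ℕ)
    (g : G) : monom e α g = monom (fun i ↦ e i g) α := by
  simp [monom, AddChar.prod_apply]

lemma exists_linearMap_monom [CommSemiring R] (g : (ι → ℕ) → R) :
    ∃ φ : MvPolynomial ι R →ₗ[R] R, ∀ α, φ (monom MvPolynomial.X α) = g α := by
  refine ⟨(MvPolynomial.basisMonomials ι R).constr R fun s ↦ g s, fun α ↦ ?_⟩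
  have hα : monom MvPolynomial.X α =
      MvPolynomial.basisMonomials ι R (Finsupp.equivFunOnFinite.symm α) := by
    simp [monom, MvPolynomial.monomial_eq, Finsupp.prod_fintype]
  rw [hα, Module.Basis.constr_basis]
  rfl

end Monomials

section SquareCoefficients

lemma card_filter_add_eq_le (A : Finset (ι → ℕ)) (γ : ι → ℕ) :
    #{q ∈ A ×ˢ A | q.1 + q.2 = γ} ≤ 2 ^ ∑ i, γ i := by
  classical
  calc #{q ∈ A ×ˢ A | q.1 + q.2 = γ} ≤ #(Iic γ) := by
        refine card_le_card_of_injOn Prod.fst (fun q hq ↦ ?_) fun q hq q' hq' h ↦ ?_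
        · simp only [coe_filter, Set.mem_ofPred_eq] at hq
          simp [← hq.2]
        · simp only [coe_filter, Set.mem_ofPred_eq] at hq hq'
          exact Prod.ext h (add_left_cancel (h ▸ hq.2.trans hq'.2.symm))
    _ = ∏ i, (γ i + 1) := by simp [Pi.card_Iic]
    _ ≤ ∏ i, 2 ^ γ i := prod_le_prod' fun i _ ↦ Nat.lt_two_pow_self
    _ = 2 ^ ∑ i, γ i := prod_pow_eq_pow_sum _ _ _

/-- The coefficient of `z ^ γ` in the square of `∑ α ∈ A, d α * z ^ α`. -/
def sqCoeff {R : Type*} [CommSemiring R] (A : Finset (ι → ℕ)) (d : (ι → ℕ) → R) (γ : ι → ℕ) : R :=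
  ∑ q ∈ A ×ˢ A with q.1 + q.2 = γ, d q.1 * d q.2

lemma nnnorm_sqCoeff_sq_le (A : Finset (ι → ℕ)) (d : (ι → ℕ) → ℂ) (γ : ι → ℕ) :
    ‖sqCoeff A d γ‖₊ ^ 2 ≤
      2 ^ (∑ i, γ i) * ∑ q ∈ A ×ˢ A with q.1 + q.2 = γ, ‖d q.1‖₊ ^ 2 * ‖d q.2‖₊ ^ 2 := by
  calc ‖sqCoeff A d γ‖₊ ^ 2
      ≤ (∑ q ∈ A ×ˢ A with q.1 + q.2 = γ, ‖d q.1‖₊ * ‖d q.2‖₊) ^ 2 := by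
        gcongr
        simpa only [sqCoeff, nnnorm_mul] using
          nnnorm_sum_le _ fun q : (ι → ℕ) × (ι → ℕ) ↦ d q.1 * d q.2
    _ ≤ #{q ∈ A ×ˢ A | q.1 + q.2 = γ} *
          ∑ q ∈ A ×ˢ A with q.1 + q.2 = γ, (‖d q.1‖₊ * ‖d q.2‖₊) ^ 2 :=
        sq_sum_le_card_mul_sum_sq
    _ ≤ _ := by
        simp only [mul_pow]
        gcongr
        exact_mod_cast card_filter_add_eq_le A γ

end SquareCoefficients

section Polarization

lemma norm_coeff_one_le_of_forall_norm_eval_le (P : Polynomial ℂ) {r C : ℝ} (hr : 0 < r)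
    (h : ∀ w : ℂ, ‖w‖ = r → ‖P.eval w‖ ≤ C) : ‖P.coeff 1‖ ≤ C / r := by
  have hderiv := Complex.norm_deriv_le_of_forall_mem_sphere_norm_le (c := 0) hr
    P.differentiable.diffContOnCl fun w hw ↦ h w (mem_sphere_zero_iff_norm.1 hw)
  simpa [P.deriv, Polynomial.coeff_derivative, ← Polynomial.coeff_zero_eq_eval_zero] using hderiv

lemma exists_polynomial_eval_eq_map_smul_add_pow {R A : Type*} [CommSemiring R] [CommSemiring A]
    [Algebra R A] (φ : A →ₗ[R] R) (x y : A) (n : ℕ) :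
    ∃ P : Polynomial R, (∀ w, P.eval w = φ ((w • x + y) ^ (n + 1))) ∧
      P.coeff 1 = (n + 1) * φ (x * y ^ n) := by
  refine ⟨∑ k ∈ range (n + 2), Polynomial.C ((n + 1).choose k * φ (x ^ k * y ^ (n + 1 - k))) *
    Polynomial.X ^ k, fun w ↦ ?_, ?_⟩
  · simp only [Polynomial.eval_finsetSum, Polynomial.eval_C_mul, Polynomial.eval_pow,
      Polynomial.eval_X, add_pow, map_sum]
    refine sum_congr rfl fun k _ ↦ ?_
    rw [smul_pow, smul_mul_assoc, mul_comm _ (Nat.cast _), ← nsmul_eq_mul (n := (n + 1).choose k),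
      ← nsmul_eq_mul, map_nsmul, map_smul, smul_eq_mul, smul_mul_assoc, mul_comm]
  · simp only [Polynomial.finsetSum_coeff, Polynomial.coeff_C_mul_X_pow, sum_ite_eq]
    simp

variable {A V : Type*} [CommSemiring A] [Algebra ℂ A] [SeminormedAddCommGroup V] [NormedSpace ℂ V]
  {L : V →ₗ[ℂ] A}

lemma norm_map_pow_le_of_norm_le {φ : A →ₗ[ℂ] ℂ} {n : ℕ} {M : ℝ}
    (h : ∀ z, ‖z‖ ≤ 1 → ‖φ (L z ^ n)‖ ≤ M) {ρ : ℝ} (hρ : 0 < ρ) {z : V} (hz : ‖z‖ ≤ ρ) :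
    ‖φ (L z ^ n)‖ ≤ ρ ^ n * M := by
  have hscale : z = (ρ : ℂ) • (ρ : ℂ)⁻¹ • z := by
    rw [smul_inv_smul₀ (by exact_mod_cast hρ.ne')]
  have hunit : ‖(ρ : ℂ)⁻¹ • z‖ ≤ 1 := by
    rw [norm_smul, norm_inv, Complex.norm_of_nonneg hρ.le]
    exact inv_mul_le_one_of_le₀ hz hρ.le
  calc ‖φ (L z ^ n)‖ = ρ ^ n * ‖φ (L ((ρ : ℂ)⁻¹ • z) ^ n)‖ := by
        conv_lhs => rw [hscale]
        rw [map_smul, smul_pow, map_smul, norm_smul, norm_pow, Complex.norm_of_nonneg hρ.le]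
    _ ≤ ρ ^ n * M := by gcongr; exact h _ hunit

/-- Cauchy's estimate for `w ↦ φ (L (w • x + y) ^ (n + 1))` on the circle of radius `1 / (n + 1)`:
by homogeneity, leaving the unit ball costs only `(1 + 1 / (n + 1)) ^ (n + 1) ≤ e`. -/
lemma norm_map_mul_pow_le {φ : A →ₗ[ℂ] ℂ} {n : ℕ} {M : ℝ}
    (h : ∀ z, ‖z‖ ≤ 1 → ‖φ (L z ^ (n + 1))‖ ≤ M) {x y : V} (hx : ‖x‖ ≤ 1) (hy : ‖y‖ ≤ 1) :
    ‖φ (L x * L y ^ n)‖ ≤ Real.exp 1 * M := by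
  have hM : 0 ≤ M := (norm_nonneg _).trans (h 0 (by simp))
  obtain ⟨P, heval, hcoeff⟩ := exists_polynomial_eval_eq_map_smul_add_pow φ (L x) (L y) n
  have hbound (w : ℂ) (hw : ‖w‖ = 1 / (n + 1)) : ‖P.eval w‖ ≤ Real.exp 1 * M := by
    have hnorm : ‖w • x + y‖ ≤ 1 + ((n + 1 : ℕ) : ℝ)⁻¹ := by
      calc ‖w • x + y‖ ≤ ‖w‖ * ‖x‖ + ‖y‖ := norm_smul w x ▸ norm_add_le _ _
        _ ≤ 1 / (n + 1) * 1 + 1 := by rw [hw]; gcongr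
        _ = _ := by push_cast; ring
    calc ‖P.eval w‖ = ‖φ (L (w • x + y) ^ (n + 1))‖ := by rw [heval, map_add, map_smul]
      _ ≤ (1 + ((n + 1 : ℕ) : ℝ)⁻¹) ^ (n + 1) * M :=
          norm_map_pow_le_of_norm_le h (by positivity) hnorm
      _ ≤ Real.exp 1 * M := by gcongr; exact Real.one_add_inv_pow_le_exp
  have hcauchy := norm_coeff_one_le_of_forall_norm_eval_le P (by positivity) hbound
  rw [hcoeff, norm_mul, div_div_eq_mul_div, div_one, mul_comm] at hcauchy
  have hn : ‖(n + 1 : ℂ)‖ = n + 1 := by exact_mod_cast Complex.norm_natCast (n + 1)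
  rw [hn] at hcauchy
  exact le_of_mul_le_mul_right hcauchy (by positivity)

lemma norm_map_pow_mul_pow_le {φ : A →ₗ[ℂ] ℂ} {k j : ℕ} {M : ℝ}
    (h : ∀ z, ‖z‖ ≤ 1 → ‖φ (L z ^ (k + j))‖ ≤ M) {x y : V} (hx : ‖x‖ ≤ 1) (hy : ‖y‖ ≤ 1) :
    ‖φ (L x ^ k * L y ^ j)‖ ≤ Real.exp 1 ^ k * M := by
  induction k generalizing φ M with
  | zero => simpa using h y hy
  | succ k ih =>
    have hslot (z : V) (hz : ‖z‖ ≤ 1) :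
        ‖(φ ∘ₗ LinearMap.mulLeft ℂ (L x)) (L z ^ (k + j))‖ ≤ Real.exp 1 * M :=
      norm_map_mul_pow_le (by simpa only [add_right_comm] using h) hx hz
    simpa only [LinearMap.comp_apply, LinearMap.mulLeft_apply, ← mul_assoc, ← pow_succ',
      ← pow_succ] using ih hslot

lemma sum_norm_map_single_le [DecidableEq ι] (f : (ι → ℂ) →ₗ[ℂ] ℂ) {C : ℝ}
    (h : ∀ z, ‖z‖ ≤ 1 → ‖f z‖ ≤ C) : ∑ x, ‖f (Pi.single x 1)‖ ≤ C := by
  choose u hu huf using fun x ↦ RCLike.exists_norm_eq_mul_self (f (Pi.single x 1))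
  have hfu : f u = ((∑ x, ‖f (Pi.single x 1)‖ : ℝ) : ℂ) := by
    have hsingle (x : ι) : (fun i ↦ if x = i then 1 else 0) = (Pi.single x 1 : ι → ℂ) := by
      ext i; simp [Pi.single_apply, eq_comm]
    rw [LinearMap.pi_apply_eq_sum_univ f u, Complex.ofReal_sum]
    exact sum_congr rfl fun x _ ↦ by rw [hsingle, smul_eq_mul]; exact (huf x).symm
  calc ∑ x, ‖f (Pi.single x 1)‖ = ‖f u‖ := by
        rw [hfu, Complex.norm_of_nonneg (by positivity)]
    _ ≤ C := h u ((pi_norm_le_iff_of_nonneg zero_le_one).2 fun x ↦ (hu x).le)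

lemma sum_nnnorm_map_mul_pow_mul_pow_le (X : ι → A) {φ : A →ₗ[ℂ] ℂ} {k j : ℕ} {M : ℝ≥0}
    (h : ∀ z, ‖z‖ ≤ 1 → ‖φ (Fintype.linearCombination ℂ X z ^ (k + 1 + j))‖ ≤ M) {w y : ι → ℂ}
    (hw : ‖w‖ ≤ 1) (hy : ‖y‖ ≤ 1) :
    ∑ x, ‖φ (X x * (Fintype.linearCombination ℂ X w ^ k *
      Fintype.linearCombination ℂ X y ^ j))‖₊ ≤ 3 ^ (k + 1) * M := by
  classical
  set L := Fintype.linearCombination ℂ X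
  have hbound (x : ι → ℂ) (hx : ‖x‖ ≤ 1) : ‖φ (L x * (L w ^ k * L y ^ j))‖ ≤ 3 ^ (k + 1) * M := by
    have hslot (z : ι → ℂ) (hz : ‖z‖ ≤ 1) :
        ‖(φ ∘ₗ LinearMap.mulLeft ℂ (L x)) (L z ^ (k + j))‖ ≤ Real.exp 1 * M :=
      norm_map_mul_pow_le (by simpa only [add_right_comm] using h) hx hz
    calc ‖φ (L x * (L w ^ k * L y ^ j))‖ ≤ Real.exp 1 ^ k * (Real.exp 1 * M) :=
          norm_map_pow_mul_pow_le hslot hw hy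
      _ = Real.exp 1 ^ (k + 1) * M := by ring
      _ ≤ 3 ^ (k + 1) * M := by gcongr; exact Real.exp_one_lt_three.le
  have hsum := sum_norm_map_single_le
    (φ ∘ₗ LinearMap.mulRight ℂ (L w ^ k * L y ^ j) ∘ₗ L) hbound
  have hL (x : ι) : L (Pi.single x 1) = X x := by simp [L]
  simp only [LinearMap.comp_apply, LinearMap.mulRight_apply, hL] at hsum
  exact NNReal.coe_le_coe.1 (by push_cast; exact hsum)

end Polarization

variable [DecidableEq ι]

/-- The multi-indices `α : ι → ℕ` with `|α| = n`. -/
abbrev multiIndices (ι : Type*) [Fintype ι] [DecidableEq ι] (n : ℕ) : Finset (ι → ℕ) :=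
  piAntidiag univ n

lemma sum_pow_eq_sum_multiIndices {R : Type*} [CommSemiring R] (z : ι → R) (n : ℕ) :
    (∑ x, z x) ^ n = ∑ α ∈ multiIndices ι n, Nat.multinomial univ α * monom z α :=
  sum_pow_eq_sum_piAntidiag univ z n

/-- Pascal's rule for multinomial coefficients, obtained by applying a linear functional to
`(∑ x, X x) ^ (n + 1) = (∑ x, X x) * (∑ x, X x) ^ n`. -/
lemma sum_multinomial_mul_add_single {R : Type*} [CommSemiring R] (n : ℕ) (g : (ι → ℕ) → R) :
    ∑ x, ∑ α ∈ multiIndices ι n, Nat.multinomial univ α * g (α + Pi.single x 1) =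
      ∑ α ∈ multiIndices ι (n + 1), Nat.multinomial univ α * g α := by
  let X : ι → MvPolynomial ι R := MvPolynomial.X
  obtain ⟨φ, hφ⟩ : ∃ φ : MvPolynomial ι R →ₗ[R] R, ∀ α, φ (monom X α) = g α :=
    exists_linearMap_monom g
  have hmul (x : ι) (α : ι → ℕ) : X x * (Nat.multinomial univ α • monom X α) =
      Nat.multinomial univ α • monom X (α + Pi.single x 1) := by
    rw [monom_add, monom_single, mul_smul_comm, mul_comm]
  have hpow : φ ((∑ x, X x) ^ (n + 1)) = φ ((∑ x, X x) * (∑ x, X x) ^ n) := by rw [pow_succ']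
  simp only [sum_pow_eq_sum_multiIndices, sum_mul_sum, hmul, ← nsmul_eq_mul, map_sum, map_nsmul,
    hφ] at hpow
  simpa only [nsmul_eq_mul] using hpow.symm

section SlotNorm

/-- Regard `F : (ι → ℕ) → ℝ≥0` as a symmetric array, `F α` being its entry at any tuple of indices
in which each `i` occurs `α i` times. Then `slotNorm p F` is the array with one argument fewer
obtained by taking the `ℓ^p` norm in one of the arguments. -/
noncomputable def slotNorm (p : ℝ) (F : (ι → ℕ) → ℝ≥0) (β : ι → ℕ) : ℝ≥0 :=
  (∑ x, F (β + Pi.single x 1) ^ p) ^ (1 / p)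

variable {p q r θ : ℝ}

lemma slotNorm_mono (hp : 0 ≤ p) : Monotone (slotNorm (ι := ι) p) := fun F G h β ↦ by
  unfold slotNorm
  gcongr
  exact h _

lemma iterate_slotNorm_apply (hp : p ≠ 0) (n : ℕ) (F : (ι → ℕ) → ℝ≥0) (β : ι → ℕ) :
    (slotNorm p)^[n] F β =
      (∑ α ∈ multiIndices ι n, Nat.multinomial univ α * F (β + α) ^ p) ^ (1 / p) := by
  induction n generalizing β with
  | zero => simp [Nat.multinomial, hp]
  | succ n ih =>
    rw [Function.iterate_succ_apply', slotNorm]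
    simp only [ih, ← NNReal.rpow_mul, one_div_mul_cancel hp, NNReal.rpow_one]
    rw [← sum_multinomial_mul_add_single n fun α ↦ F (β + α) ^ p]
    simp only [add_assoc, add_comm (Pi.single _ _)]

lemma slotNorm_slotNorm_le (hp : 0 < p) (hpq : p ≤ q) (F : (ι → ℕ) → ℝ≥0) :
    slotNorm q (slotNorm p F) ≤ slotNorm p (slotNorm q F) := fun β ↦ by
  have hq : 0 < q := hp.trans_le hpq
  have hqp : 1 / (q / p) * (1 / p) = 1 / q := by field_simp
  have hqp' : 1 / (q / p) = 1 / q * p := by field_simp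
  calc slotNorm q (slotNorm p F) β
      = ((∑ x, (∑ y, F (β + Pi.single x 1 + Pi.single y 1) ^ p) ^ (q / p)) ^ (1 / (q / p))) ^
          (1 / p) := by
        simp only [slotNorm, ← NNReal.rpow_mul, hqp, one_div_mul_eq_div]
    _ ≤ (∑ y, (∑ x, (F (β + Pi.single x 1 + Pi.single y 1) ^ p) ^ (q / p)) ^ (1 / (q / p))) ^
          (1 / p) := by
        gcongr
        exact rpow_sum_rpow_le_sum univ univ _ ((one_le_div hp).2 hpq)
    _ = slotNorm p (slotNorm q F) β := by
        simp_rw [slotNorm, ← NNReal.rpow_mul, mul_div_cancel₀ q hp.ne', hqp', add_right_comm β]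

lemma slotNorm_iterate_slotNorm_le (hp : 0 < p) (hpq : p ≤ q) (n : ℕ) (F : (ι → ℕ) → ℝ≥0) :
    slotNorm q ((slotNorm p)^[n] F) ≤ (slotNorm p)^[n] (slotNorm q F) := by
  induction n with
  | zero => rfl
  | succ n ih =>
    simp only [Function.iterate_succ_apply']
    exact (slotNorm_slotNorm_le hp hpq _).trans (slotNorm_mono hp.le ih)

lemma slotNorm_rpow_mul_rpow_le (hp : 0 < p) (hq : 0 < q) (hr : 0 < r) (hθ : 0 ≤ θ)
    (hr' : 1 / r = (1 - θ) / p + θ / q) {s : ℝ} (hs : 0 ≤ s) (hsθ : s + θ ≤ 1)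
    (F G : (ι → ℕ) → ℝ≥0) (β : ι → ℕ) :
    slotNorm r (fun α ↦ F α ^ (1 - s) * G α ^ s) β ≤
      slotNorm p F β ^ (1 - s - θ) * slotNorm q F β ^ θ * slotNorm p G β ^ s := by
  have h1 : 0 ≤ 1 - s - θ := by linarith
  have hsum : r * ((1 - s - θ) / p) + r * (θ / q) + r * (s / p) = 1 :=
    calc _ = r * (1 / r) := by rw [hr']; ring
      _ = 1 := mul_one_div_cancel hr.ne'
  calc slotNorm r (fun α ↦ F α ^ (1 - s) * G α ^ s) β
      = (∑ x, (F (β + Pi.single x 1) ^ p) ^ (r * ((1 - s - θ) / p)) *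
          (F (β + Pi.single x 1) ^ q) ^ (r * (θ / q)) *
          (G (β + Pi.single x 1) ^ p) ^ (r * (s / p))) ^ (1 / r) := by
        simp only [slotNorm, NNReal.mul_rpow, ← NNReal.rpow_mul]
        congr! 3 with x
        · rw [← NNReal.rpow_add_of_nonneg _ (by positivity) (by positivity)]
          congr 1; field_simp; ring
        · field_simp
    _ ≤ ((∑ x, F (β + Pi.single x 1) ^ p) ^ (r * ((1 - s - θ) / p)) *
          (∑ x, F (β + Pi.single x 1) ^ q) ^ (r * (θ / q)) *
          (∑ x, G (β + Pi.single x 1) ^ p) ^ (r * (s / p))) ^ (1 / r) := by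
        gcongr
        exact sum_rpow_mul_rpow_mul_rpow_le univ _ _ _ (by positivity) (by positivity)
          (by positivity) hsum
    _ = _ := by
        have hcancel (a b : ℝ) : r * (a / b) * (1 / r) = 1 / b * a := by field_simp
        simp only [slotNorm, NNReal.mul_rpow, ← NNReal.rpow_mul, hcancel]

/-- Blei's interpolation, one slot at a time: each application of `slotNorm r` transfers a further
weight `θ` to the mixed norm with a single slot of exponent `q`. -/
lemma iterate_slotNorm_le_rpow_mul_rpow (hp : 0 < p) (hpq : p ≤ q) (hr : 0 < r) (hθ : 0 ≤ θ)
    (hr' : 1 / r = (1 - θ) / p + θ / q) (F : (ι → ℕ) → ℝ≥0) {n : ℕ} (hn : (n + 1) * θ ≤ 1)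
    (β : ι → ℕ) :
    (slotNorm r)^[n + 1] F β ≤ (slotNorm p)^[n + 1] F β ^ (1 - (n + 1) * θ) *
      (slotNorm p)^[n] (slotNorm q F) β ^ ((n + 1) * θ) := by
  have hq : 0 < q := hp.trans_le hpq
  induction n generalizing β with
  | zero =>
    simpa using slotNorm_rpow_mul_rpow_le hp hq hr hθ hr' le_rfl (by simpa using hn) F F β
  | succ n ih =>
    push_cast at hn ⊢
    set A := (slotNorm p)^[n + 1] F
    set B := (slotNorm p)^[n] (slotNorm q F)
    have hB : (slotNorm p)^[n + 1] (slotNorm q F) = slotNorm p B :=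
      Function.iterate_succ_apply' _ _ _
    calc (slotNorm r)^[n + 1 + 1] F β = slotNorm r ((slotNorm r)^[n + 1] F) β := by
          rw [Function.iterate_succ_apply']
      _ ≤ slotNorm r (fun α ↦ A α ^ (1 - (n + 1) * θ) * B α ^ ((n + 1) * θ)) β :=
          slotNorm_mono hr.le (ih (by linarith)) β
      _ ≤ slotNorm p A β ^ (1 - (n + 1) * θ - θ) * slotNorm q A β ^ θ *
            slotNorm p B β ^ ((n + 1) * θ) :=
          slotNorm_rpow_mul_rpow_le hp hq hr hθ hr' (by positivity) (by linarith) A B β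
      _ ≤ slotNorm p A β ^ (1 - (n + 1) * θ - θ) * slotNorm p B β ^ θ *
            slotNorm p B β ^ ((n + 1) * θ) := by
          gcongr
          exact (slotNorm_iterate_slotNorm_le hp hpq (n + 1) F β).trans_eq (congrFun hB β)
      _ = _ := by
          rw [mul_assoc, ← NNReal.rpow_add_of_nonneg _ hθ (by positivity), hB,
            Function.iterate_succ_apply' (slotNorm p) (n + 1)]
          congr 2 <;> ring

end SlotNorm

/-- The Bohnenblust–Hille exponent `2k / (k + 1)` for `k`-linear forms. -/
noncomputable def bhExponent (k : ℕ) : ℝ := 2 * k / (k + 1)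

lemma bhExponent_pos {k : ℕ} (hk : 1 ≤ k) : 0 < bhExponent k := by
  unfold bhExponent; positivity

lemma bhExponent_le_two (k : ℕ) : bhExponent k ≤ 2 := by
  rw [bhExponent, div_le_iff₀ (by positivity)]; linarith

lemma bhExponent_one : bhExponent 1 = 1 := by norm_num [bhExponent]

lemma iterate_slotNorm_bhExponent_succ_le {k : ℕ} (hk : 1 ≤ k) (F : (ι → ℕ) → ℝ≥0) :
    (slotNorm (bhExponent (k + 1)))^[k + 1] F ≤ (slotNorm (bhExponent k))^[k] (slotNorm 2 F) := by
  intro β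
  have hθ : ((k : ℝ) + 1) * (1 / (k + 1)) = 1 := by field_simp
  have h := iterate_slotNorm_le_rpow_mul_rpow (θ := 1 / (k + 1)) (bhExponent_pos hk)
    (bhExponent_le_two k) (bhExponent_pos k.succ_pos) (by positivity)
    (by unfold bhExponent; push_cast; field_simp; ring) F hθ.le β
  simpa only [hθ, sub_self, NNReal.rpow_zero, one_mul, NNReal.rpow_one] using h

lemma iterate_slotNorm_bhExponent_add_le {k : ℕ} (hk : 1 ≤ k) (j : ℕ) (F : (ι → ℕ) → ℝ≥0) :
    (slotNorm (bhExponent (k + j)))^[k + j] F ≤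
      (slotNorm (bhExponent k))^[k] ((slotNorm 2)^[j] F) := by
  induction j generalizing F with
  | zero => rfl
  | succ j ih =>
    exact (iterate_slotNorm_bhExponent_succ_le (k := k + j) (by omega) F).trans (ih _)

section Characters

lemma norm_addChar_apply_le_one {ι G : Type*} [AddCommGroup G] [Fintype ι] [Finite G]
    (e : ι → AddChar G ℂ) (g : G) : ‖fun i ↦ e i g‖ ≤ 1 :=
  (pi_norm_le_iff_of_nonneg zero_le_one).2 fun i ↦ ((e i).norm_apply g).le

variable {G : Type*} [AddCommGroup G]

lemma expect_addChar_mul_conj [Fintype G] (ψ₁ ψ₂ : AddChar G ℂ) :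
    𝔼 g, ψ₁ g * starRingEnd ℂ (ψ₂ g) = if ψ₁ = ψ₂ then 1 else 0 := by
  simpa [RCLike.wInner_cWeight_eq_expect, eq_comm] using AddChar.wInner_cWeight_eq_boole ψ₂ ψ₁

lemma expect_nnnorm_sq_sum_addChar [Fintype G] {κ : Type*} {A : Finset κ} {χ : κ → AddChar G ℂ}
    (hχ : Set.InjOn χ A) (d : κ → ℂ) :
    𝔼 g, ‖∑ a ∈ A, d a * χ a g‖₊ ^ 2 = ∑ a ∈ A, ‖d a‖₊ ^ 2 := by
  have hsq (w : ℂ) : ((‖w‖₊ ^ 2 : ℝ≥0) : ℂ) = w * starRingEnd ℂ w := by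
    rw [Complex.mul_conj']; simp
  suffices h : 𝔼 g, ((‖∑ a ∈ A, d a * χ a g‖₊ ^ 2 : ℝ≥0) : ℂ) =
      ∑ a ∈ A, ((‖d a‖₊ ^ 2 : ℝ≥0) : ℂ) by
    have h' : ((𝔼 g, ‖∑ a ∈ A, d a * χ a g‖₊ ^ 2 : ℝ≥0) : ℂ) =
      ((∑ a ∈ A, ‖d a‖₊ ^ 2 : ℝ≥0) : ℂ) := by push_cast at h ⊢; exact h
    exact_mod_cast h'
  calc 𝔼 g, ((‖∑ a ∈ A, d a * χ a g‖₊ ^ 2 : ℝ≥0) : ℂ)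
      = 𝔼 g, ∑ a ∈ A, ∑ b ∈ A, d a * starRingEnd ℂ (d b) * (χ a g * starRingEnd ℂ (χ b g)) := by
        simp only [hsq, map_sum, map_mul, sum_mul_sum, mul_mul_mul_comm]
    _ = ∑ a ∈ A, ∑ b ∈ A, d a * starRingEnd ℂ (d b) * if χ a = χ b then 1 else 0 := by
        simp only [expect_sum_comm, ← mul_expect, expect_addChar_mul_conj]
    _ = ∑ a ∈ A, ((‖d a‖₊ ^ 2 : ℝ≥0) : ℂ) := by
        refine sum_congr rfl fun a ha ↦ ?_
        rw [sum_eq_single_of_mem a ha fun b hb hba ↦ by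
          rw [if_neg fun h ↦ hba (hχ ha hb h).symm, mul_zero], if_pos rfl, mul_one, hsq]

end Characters

section FourthMoment

lemma add_mem_multiIndices {j k : ℕ} {α β : ι → ℕ} (hα : α ∈ multiIndices ι j)
    (hβ : β ∈ multiIndices ι k) : α + β ∈ multiIndices ι (j + k) := by
  simp_all [sum_add_distrib]

lemma sq_sum_monom {R : Type*} [CommSemiring R] (d : (ι → ℕ) → R) (j : ℕ) (z : ι → R) :
    (∑ α ∈ multiIndices ι j, d α * monom z α) ^ 2 =
      ∑ γ ∈ multiIndices ι (j + j), sqCoeff (multiIndices ι j) d γ * monom z γ := by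
  rw [sq, sum_mul_sum, ← sum_product', ← sum_fiberwise_of_maps_to fun q hq ↦
    add_mem_multiIndices (mem_product.1 hq).1 (mem_product.1 hq).2]
  refine sum_congr rfl fun γ _ ↦ ?_
  rw [sqCoeff, sum_mul]
  refine sum_congr rfl fun q hq ↦ ?_
  rw [← (mem_filter.1 hq).2, monom_add, mul_mul_mul_comm]

lemma sum_nnnorm_sqCoeff_sq_le (d : (ι → ℕ) → ℂ) (j : ℕ) :
    ∑ γ ∈ multiIndices ι (j + j), ‖sqCoeff (multiIndices ι j) d γ‖₊ ^ 2 ≤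
      4 ^ j * (∑ α ∈ multiIndices ι j, ‖d α‖₊ ^ 2) ^ 2 := by
  let A := multiIndices ι j
  calc ∑ γ ∈ multiIndices ι (j + j), ‖sqCoeff A d γ‖₊ ^ 2
      ≤ ∑ γ ∈ multiIndices ι (j + j),
          2 ^ (j + j) * ∑ q ∈ A ×ˢ A with q.1 + q.2 = γ, ‖d q.1‖₊ ^ 2 * ‖d q.2‖₊ ^ 2 := by
        gcongr with γ hγ
        simpa [(mem_piAntidiag.1 hγ).1] using nnnorm_sqCoeff_sq_le A d γ
    _ = 4 ^ j * ∑ q ∈ A ×ˢ A, ‖d q.1‖₊ ^ 2 * ‖d q.2‖₊ ^ 2 := by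
        rw [← mul_sum, sum_fiberwise_of_maps_to fun q hq ↦
          add_mem_multiIndices (mem_product.1 hq).1 (mem_product.1 hq).2, ← two_mul, pow_mul,
          show (2 : ℝ≥0) ^ 2 = 4 by norm_num]
    _ = 4 ^ j * (∑ α ∈ A, ‖d α‖₊ ^ 2) ^ 2 := by rw [sq, sum_mul_sum, sum_product]

end FourthMoment

section Hypercontractivity

variable {G : Type*} [AddCommGroup G]

lemma injOn_monom_multiIndices {j : ℕ} {e : ι → AddChar G ℂ}
    (he : Set.InjOn (monom e) (multiIndices ι (j + j))) :
    Set.InjOn (monom e) (multiIndices ι j) := fun α hα β hβ h ↦ by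
  have hadd := he (add_mem_multiIndices hα hα) (add_mem_multiIndices hα hβ)
    (by rw [monom_add, monom_add, h])
  exact add_left_cancel hadd

variable [Fintype G]

/-- A fourth moment is the second moment of the square, to which Parseval's identity applies. -/
lemma expect_nnnorm_sum_monom_pow_four_le {j : ℕ} {e : ι → AddChar G ℂ}
    (he : Set.InjOn (monom e) (multiIndices ι (j + j))) (d : (ι → ℕ) → ℂ) :
    𝔼 g, ‖∑ α ∈ multiIndices ι j, d α * monom (fun i ↦ e i g) α‖₊ ^ 4 ≤
      4 ^ j * (∑ α ∈ multiIndices ι j, ‖d α‖₊ ^ 2) ^ 2 :=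
  calc 𝔼 g, ‖∑ α ∈ multiIndices ι j, d α * monom (fun i ↦ e i g) α‖₊ ^ 4
      = 𝔼 g, ‖∑ γ ∈ multiIndices ι (j + j), sqCoeff (multiIndices ι j) d γ * monom e γ g‖₊ ^ 2 := by
        simp only [monom_addChar_apply, ← sq_sum_monom, nnnorm_pow, ← pow_mul]
    _ ≤ _ := (expect_nnnorm_sq_sum_addChar he _).trans_le (sum_nnnorm_sqCoeff_sq_le d j)

lemma rpow_sum_nnnorm_sq_le_rpow_expect {j : ℕ} {e : ι → AddChar G ℂ}
    (he : Set.InjOn (monom e) (multiIndices ι (j + j))) {p : ℝ} (hp : 0 < p) (hp2 : p ≤ 2)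
    (d : (ι → ℕ) → ℂ) :
    (∑ α ∈ multiIndices ι j, ‖d α‖₊ ^ 2) ^ (1 / 2 : ℝ) ≤ (2 ^ j) ^ (2 / p - 1) *
      (𝔼 g, ‖∑ α ∈ multiIndices ι j, d α * monom (fun i ↦ e i g) α‖₊ ^ p) ^ (1 / p) := by
  have hpars : 𝔼 g, ‖∑ α ∈ multiIndices ι j, d α * monom (fun i ↦ e i g) α‖₊ ^ 2 =
      ∑ α ∈ multiIndices ι j, ‖d α‖₊ ^ 2 := by
    simpa only [monom_addChar_apply] using
      expect_nnnorm_sq_sum_addChar (injOn_monom_multiIndices he) d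
  have hconst : ((4 : ℝ≥0) ^ j) ^ (1 / p - 1 / 2) = (2 ^ j) ^ (2 / p - 1) := by
    rw [show (4 : ℝ≥0) = 2 ^ (2 : ℕ) by norm_num, ← pow_mul, mul_comm, pow_mul,
      ← NNReal.rpow_natCast (2 ^ j), ← NNReal.rpow_mul]
    congr 1; push_cast; ring
  have h4 := expect_nnnorm_sum_monom_pow_four_le he d
  rw [← hpars] at h4
  simpa only [hpars, hconst] using rpow_expect_sq_le univ _ hp hp2 h4

end Hypercontractivity

/-- The coordinate characters of the group `(ℤ/R)^ι`, seen as the grid of `R`-th roots of unity in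
the torus. -/
noncomputable def gridChar (ι : Type*) (R : ℕ) [NeZero R] (i : ι) : AddChar (ι → ZMod R) ℂ :=
  ZMod.stdAddChar.compAddMonoidHom (Pi.evalAddMonoidHom _ i)

lemma injOn_monom_gridChar {n R : ℕ} [NeZero R] (hR : n < R) :
    Set.InjOn (monom (gridChar ι R)) (multiIndices ι n) := fun α hα β hβ h ↦ by
  have hlt {α : ι → ℕ} (hα : α ∈ multiIndices ι n) (i : ι) : α i < R := by
    rw [mem_piAntidiag] at hα
    exact ((single_le_sum (fun i _ ↦ Nat.zero_le _) (mem_univ i)).trans_eq hα.1).trans_lt hR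
  have happly (α : ι → ℕ) (i : ι) :
      monom (gridChar ι R) α (Pi.single i 1) = ZMod.stdAddChar (α i : ZMod R) := by
    rw [monom_addChar_apply, monom, prod_eq_single i]
    · simp [gridChar, ← AddChar.map_nsmul_eq_pow]
    · intro b _ hb; simp [gridChar, hb]
    · simp
  funext i
  have hi := ZMod.injective_stdAddChar ((happly α i).symm.trans ((h ▸ happly β i)))
  rwa [ZMod.natCast_eq_natCast_iff', Nat.mod_eq_of_lt (hlt hα i), Nat.mod_eq_of_lt (hlt hβ i)] at hi

lemma exists_injOn_monom_addChar.{u} (ι : Type u) [Fintype ι] [DecidableEq ι] (n : ℕ) :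
    ∃ (G : Type u) (_ : AddCommGroup G) (_ : Fintype G) (e : ι → AddChar G ℂ),
      Set.InjOn (monom e) (multiIndices ι n) :=
  ⟨ι → ZMod (n + 1), inferInstance, inferInstance, gridChar ι (n + 1),
    injOn_monom_gridChar n.lt_succ_self⟩

lemma map_mul_linearCombination_pow {R A : Type*} [CommSemiring R] [CommSemiring A] [Algebra R A]
    (X : ι → A) (φ : A →ₗ[R] R) (q : A) (y : ι → R) (j : ℕ) :
    φ (q * Fintype.linearCombination R X y ^ j) =
      ∑ β ∈ multiIndices ι j, Nat.multinomial univ β * φ (q * monom X β) * monom y β := by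
  rw [Fintype.linearCombination_apply, sum_pow_eq_sum_multiIndices, mul_sum, map_sum]
  refine sum_congr rfl fun β _ ↦ ?_
  rw [monom_smul, ← nsmul_eq_mul, mul_smul_comm, mul_smul_comm, map_nsmul, map_smul, smul_eq_mul,
    nsmul_eq_mul]
  ring

lemma multinomial_add_le {k j : ℕ} {γ β : ι → ℕ} (hγ : γ ∈ multiIndices ι k)
    (hβ : β ∈ multiIndices ι j) :
    Nat.multinomial univ (γ + β) ≤ (k + j) ^ k * Nat.multinomial univ β := by
  rw [mem_piAntidiag] at hγ hβ
  have hspec := Nat.multinomial_spec univ (γ + β)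
  have hspec' := Nat.multinomial_spec univ β
  simp only [Pi.add_apply, sum_add_distrib, hγ.1, hβ.1] at hspec hspec'
  have hfact : (k + j).factorial = j.factorial * (k + j).descFactorial k := by
    simpa using (Nat.factorial_mul_descFactorial (Nat.le_add_right k j)).symm
  have hprod : ∏ i, (β i).factorial ≤ ∏ i, (γ i + β i).factorial :=
    prod_le_prod' fun i _ ↦ Nat.factorial_le (Nat.le_add_left _ _)
  refine Nat.le_of_mul_le_mul_left ?_ (prod_pos fun i (_ : i ∈ univ) ↦ (γ i + β i).factorial_pos)
  calc (∏ i, (γ i + β i).factorial) * Nat.multinomial univ (γ + β)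
      = (∏ i, (β i).factorial) * Nat.multinomial univ β * (k + j).descFactorial k := by
        rw [hspec, hspec', hfact]
    _ ≤ (∏ i, (γ i + β i).factorial) * Nat.multinomial univ β * (k + j) ^ k := by
        gcongr
        exact Nat.descFactorial_le_pow _ _
    _ = _ := by ring

section BohnenblustHilleInequality

lemma iterate_slotNorm_le_of_le_expect {Ω : Type*} [Fintype Ω] [Nonempty Ω] {p : ℝ} (hp : 0 < p)
    {k : ℕ} {H : (ι → ℕ) → ℝ≥0} {F : Ω → (ι → ℕ) → ℝ≥0} {C K : ℝ≥0}
    (hH : ∀ γ ∈ multiIndices ι k, H γ ≤ C * (𝔼 ω, F ω γ ^ p) ^ (1 / p))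
    (hF : ∀ ω, (slotNorm p)^[k] (F ω) 0 ≤ K) : (slotNorm p)^[k] H 0 ≤ C * K := by
  have hroot (a : ℝ≥0) : (a ^ (1 / p)) ^ p = a := by
    rw [← NNReal.rpow_mul, one_div_mul_cancel hp.ne', NNReal.rpow_one]
  simp only [iterate_slotNorm_apply hp.ne', zero_add] at hF ⊢
  rw [one_div, NNReal.rpow_inv_le_iff hp]
  calc ∑ γ ∈ multiIndices ι k, Nat.multinomial univ γ * H γ ^ p
      ≤ ∑ γ ∈ multiIndices ι k,
          Nat.multinomial univ γ * (C * (𝔼 ω, F ω γ ^ p) ^ (1 / p)) ^ p := by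
        gcongr with γ hγ; exact hH γ hγ
    _ = C ^ p * 𝔼 ω, ∑ γ ∈ multiIndices ι k, Nat.multinomial univ γ * F ω γ ^ p := by
        simp only [NNReal.mul_rpow, hroot, expect_sum_comm, ← mul_expect, mul_sum, mul_left_comm]
    _ ≤ C ^ p * K ^ p := by
        gcongr
        refine expect_le univ_nonempty fun ω _ ↦ ?_
        rw [← NNReal.rpow_inv_le_iff hp, ← one_div]
        exact hF ω
    _ = (C * K) ^ p := (NNReal.mul_rpow ..).symm

variable {A : Type*} [CommSemiring A] [Algebra ℂ A] {X : ι → A} {φ : A →ₗ[ℂ] ℂ}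

lemma iterate_slotNorm_two_le {G : Type*} [AddCommGroup G] [Fintype G] {e : ι → AddChar G ℂ} {j : ℕ}
    (he : Set.InjOn (monom e) (multiIndices ι (j + j))) {p : ℝ} (hp : 0 < p) (hp2 : p ≤ 2)
    {q : A} {F : (ι → ℕ) → ℝ≥0} {γ : ι → ℕ} {C : ℝ≥0}
    (hF : ∀ β ∈ multiIndices ι j,
      F (γ + β) ^ 2 ≤ C * (Nat.multinomial univ β * ‖φ (q * monom X β)‖₊ ^ 2)) :
    (slotNorm 2)^[j] F γ ≤ C ^ (1 / 2 : ℝ) * (2 ^ j) ^ (2 / p - 1) *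
      (𝔼 g, ‖φ (q * Fintype.linearCombination ℂ X (fun i ↦ e i g) ^ j)‖₊ ^ p) ^ (1 / p) := by
  set d : (ι → ℕ) → ℂ := fun β ↦ Nat.multinomial univ β * φ (q * monom X β)
  calc (slotNorm 2)^[j] F γ
      = (∑ β ∈ multiIndices ι j, Nat.multinomial univ β * F (γ + β) ^ 2) ^ (1 / 2 : ℝ) := by
        simp only [iterate_slotNorm_apply two_ne_zero, NNReal.rpow_ofNat]
    _ ≤ (∑ β ∈ multiIndices ι j, C * ‖d β‖₊ ^ 2) ^ (1 / 2 : ℝ) := by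
        refine NNReal.rpow_le_rpow (sum_le_sum fun β hβ ↦ ?_) (by positivity)
        calc (Nat.multinomial univ β : ℝ≥0) * F (γ + β) ^ 2
            ≤ Nat.multinomial univ β *
                (C * (Nat.multinomial univ β * ‖φ (q * monom X β)‖₊ ^ 2)) := by
              gcongr; exact hF β hβ
          _ = C * ‖d β‖₊ ^ 2 := by
              rw [nnnorm_mul, Complex.nnnorm_natCast]; ring
    _ = C ^ (1 / 2 : ℝ) * (∑ β ∈ multiIndices ι j, ‖d β‖₊ ^ 2) ^ (1 / 2 : ℝ) := by
        rw [← mul_sum, NNReal.mul_rpow]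
    _ ≤ C ^ (1 / 2 : ℝ) * ((2 ^ j) ^ (2 / p - 1) * (𝔼 g, ‖∑ β ∈ multiIndices ι j,
          d β * monom (fun i ↦ e i g) β‖₊ ^ p) ^ (1 / p)) := by
        gcongr
        exact rpow_sum_nnnorm_sq_le_rpow_expect he hp hp2 d
    _ = _ := by simp only [map_mul_linearCombination_pow, d, mul_assoc]

lemma iterate_slotNorm_nnnorm_map_le {k j : ℕ} (hk : 1 ≤ k) {M : ℝ≥0}
    (h : ∀ z, ‖z‖ ≤ 1 → ‖φ (Fintype.linearCombination ℂ X z ^ (k + j))‖ ≤ M) {y : ι → ℂ}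
    (hy : ‖y‖ ≤ 1) :
    (slotNorm (bhExponent k))^[k]
      (fun γ ↦ ‖φ (monom X γ * Fintype.linearCombination ℂ X y ^ j)‖₊) 0 ≤ 6 ^ k * M := by
  set L := Fintype.linearCombination ℂ X
  obtain ⟨i, rfl⟩ := Nat.exists_eq_add_of_le hk
  set F : (ι → ℕ) → ℝ≥0 := fun γ ↦ ‖φ (monom X γ * L y ^ j)‖₊
  obtain ⟨G, _, _, e, he⟩ := exists_injOn_monom_addChar ι (i + i)
  have hsplit (γ : ι → ℕ) : (slotNorm 2)^[i] F γ ≤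
      1 ^ (1 / 2 : ℝ) * (2 ^ i) ^ (2 / 1 - 1 : ℝ) *
        (𝔼 g, ‖φ (monom X γ * L y ^ j * L (fun x ↦ e x g) ^ i)‖₊ ^ (1 : ℝ)) ^ (1 / 1 : ℝ) := by
    refine iterate_slotNorm_two_le he one_pos one_le_two fun β _ ↦ ?_
    have hmult : (1 : ℝ≥0) ≤ Nat.multinomial univ β := by
      exact_mod_cast Nat.multinomial_pos univ β
    simpa only [F, one_mul, monom_add, mul_right_comm] using le_mul_of_one_le_left zero_le hmult
  have hlast (g : G) : (slotNorm 1)^[1]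
      (fun γ ↦ ‖φ (monom X γ * L y ^ j * L (fun x ↦ e x g) ^ i)‖₊) 0 ≤ 3 ^ (i + 1) * M := by
    simpa only [Function.iterate_one, slotNorm, zero_add, monom_single, NNReal.rpow_one, div_one,
      mul_assoc, mul_comm (L y ^ j)] using sum_nnnorm_map_mul_pow_mul_pow_le X
        (by simpa only [add_comm 1 i] using h) (norm_addChar_apply_le_one e g) hy
  calc (slotNorm (bhExponent (1 + i)))^[1 + i] F 0
      ≤ (slotNorm 1)^[1] ((slotNorm 2)^[i] F) 0 := by
        simpa only [bhExponent_one] using iterate_slotNorm_bhExponent_add_le le_rfl i F 0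
    _ ≤ 1 ^ (1 / 2 : ℝ) * (2 ^ i) ^ (2 / 1 - 1 : ℝ) * (3 ^ (i + 1) * M) :=
        iterate_slotNorm_le_of_le_expect one_pos (fun γ _ ↦ hsplit γ) hlast
    _ = 2 ^ i * 3 ^ (i + 1) * M := by norm_num [mul_assoc]
    _ ≤ 2 ^ (i + 1) * 3 ^ (i + 1) * M := by
        gcongr
        · exact one_le_two
        · omega
    _ = 6 ^ (1 + i) * M := by rw [← mul_pow, add_comm]; norm_num

/-- The constant in the inequality for `m`-homogeneous polynomials when Blei's interpolation keeps
`k` of the `m` slots: `√(m ^ k)` bounds the ratios of multinomial coefficients,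
`2 ^ ((m - k) / k)` comes from hypercontractivity in the other slots, and `6 ^ k` from the `k`
slots kept. -/
noncomputable def splittingConstant (m k : ℕ) : ℝ≥0 :=
  (m ^ k) ^ (1 / 2 : ℝ) * (2 ^ (m - k)) ^ (1 / k : ℝ) * 6 ^ k

lemma iterate_slotNorm_sqrt_multinomial_mul_le {k j : ℕ} (hk : 1 ≤ k) {M : ℝ≥0}
    (h : ∀ z, ‖z‖ ≤ 1 → ‖φ (Fintype.linearCombination ℂ X z ^ (k + j))‖ ≤ M) :
    (slotNorm (bhExponent (k + j)))^[k + j]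
      (fun α ↦ NNReal.sqrt (Nat.multinomial univ α) * ‖φ (monom X α)‖₊) 0 ≤
        splittingConstant (k + j) k * M := by
  set F : (ι → ℕ) → ℝ≥0 := fun α ↦ NNReal.sqrt (Nat.multinomial univ α) * ‖φ (monom X α)‖₊
  have hexp : 2 / bhExponent k - 1 = 1 / k := by unfold bhExponent; field_simp; ring
  obtain ⟨G, _, _, e, he⟩ := exists_injOn_monom_addChar ι (j + j)
  have hsplit (γ) (hγ : γ ∈ multiIndices ι k) : (slotNorm 2)^[j] F γ ≤
      ((k + j : ℕ) ^ k) ^ (1 / 2 : ℝ) * (2 ^ j) ^ (1 / k : ℝ) *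
        (𝔼 g, ‖φ (monom X γ * Fintype.linearCombination ℂ X (fun i ↦ e i g) ^ j)‖₊ ^
          bhExponent k) ^ (1 / bhExponent k) := by
    rw [← hexp]
    refine iterate_slotNorm_two_le he (bhExponent_pos hk) (bhExponent_le_two k) fun β hβ ↦ ?_
    rw [mul_pow, NNReal.sq_sqrt, monom_add, ← mul_assoc]
    gcongr
    exact_mod_cast multinomial_add_le hγ hβ
  calc (slotNorm (bhExponent (k + j)))^[k + j] F 0
      ≤ (slotNorm (bhExponent k))^[k] ((slotNorm 2)^[j] F) 0 :=
        iterate_slotNorm_bhExponent_add_le hk j F 0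
    _ ≤ ((k + j : ℕ) ^ k) ^ (1 / 2 : ℝ) * (2 ^ j) ^ (1 / k : ℝ) * (6 ^ k * M) :=
        iterate_slotNorm_le_of_le_expect (bhExponent_pos hk) hsplit fun g ↦
          iterate_slotNorm_nnnorm_map_le hk h (norm_addChar_apply_le_one e g)
    _ = splittingConstant (k + j) k * M := by
        rw [splittingConstant, Nat.add_sub_cancel_left, mul_assoc _ (6 ^ k)]

lemma rpow_sum_nnnorm_rpow_le_iterate_slotNorm {p : ℝ} (hp : 0 < p) (hp2 : p ≤ 2) (m : ℕ)
    (c : (ι → ℕ) → ℂ) :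
    (∑ α ∈ multiIndices ι m, ‖c α‖₊ ^ p) ^ (1 / p) ≤ (slotNorm p)^[m]
      (fun α ↦ NNReal.sqrt (Nat.multinomial univ α) * ‖c α / (Nat.multinomial univ α : ℂ)‖₊) 0 := by
  simp only [iterate_slotNorm_apply hp.ne', zero_add]
  gcongr with α
  set μ : ℝ≥0 := (Nat.multinomial univ α : ℝ≥0) with hμ
  have hμ1 : 1 ≤ μ := by rw [hμ]; exact_mod_cast Nat.multinomial_pos univ α
  have hμ0 : μ ≠ 0 := (one_pos.trans_le hμ1).ne'
  calc ‖c α‖₊ ^ p ≤ μ ^ (1 - p / 2) * ‖c α‖₊ ^ p :=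
        le_mul_of_one_le_left zero_le (NNReal.one_le_rpow hμ1 (by linarith))
    _ = μ * (μ ^ (1 / 2 - 1 : ℝ) * ‖c α‖₊) ^ p := by
        rw [show 1 - p / 2 = 1 + (1 / 2 - 1) * p by ring, NNReal.rpow_add hμ0, NNReal.rpow_one,
          NNReal.mul_rpow, ← NNReal.rpow_mul, mul_assoc]
    _ = μ * (NNReal.sqrt μ * ‖c α / (Nat.multinomial univ α : ℂ)‖₊) ^ p := by
        rw [NNReal.rpow_sub_one hμ0, NNReal.sqrt_eq_rpow, nnnorm_div, Complex.nnnorm_natCast,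
          div_mul_eq_mul_div, mul_div_assoc]

lemma rpow_sum_nnnorm_rpow_bhExponent_le {k m : ℕ} (hk : 1 ≤ k) (hkm : k ≤ m) (c : (ι → ℕ) → ℂ)
    {M : ℝ≥0} (h : ∀ z, ‖z‖ ≤ 1 → ‖∑ α ∈ multiIndices ι m, c α * monom z α‖ ≤ M) :
    (∑ α ∈ multiIndices ι m, ‖c α‖₊ ^ bhExponent m) ^ (1 / bhExponent m) ≤
      splittingConstant m k * M := by
  obtain ⟨j, rfl⟩ := Nat.exists_eq_add_of_le hkm
  obtain ⟨φ, hφ⟩ := exists_linearMap_monom fun α : ι → ℕ ↦ c α / Nat.multinomial univ α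
  have heval (z : ι → ℂ) : φ (Fintype.linearCombination ℂ MvPolynomial.X z ^ (k + j)) =
      ∑ α ∈ multiIndices ι (k + j), c α * monom z α := by
    have hpow := map_mul_linearCombination_pow MvPolynomial.X φ 1 z (k + j)
    simp only [one_mul, hφ] at hpow
    rw [hpow]
    refine sum_congr rfl fun α _ ↦ ?_
    rw [mul_div_cancel₀ _ (by exact_mod_cast (Nat.multinomial_pos univ α).ne')]
  refine (rpow_sum_nnnorm_rpow_le_iterate_slotNorm (bhExponent_pos (hk.trans hkm))
    (bhExponent_le_two _) _ c).trans ?_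
  simp only [← hφ]
  exact iterate_slotNorm_sqrt_multinomial_mul_le hk (by simpa only [heval] using h)

end BohnenblustHilleInequality

section Constants

lemma exists_forall_pow_mul_pow_le (k : ℕ) {s r : ℝ≥0} (hsr : s < r) :
    ∃ C : ℝ≥0, ∀ m : ℕ, (m : ℝ≥0) ^ k * s ^ m ≤ C * r ^ m := by
  have hr : 0 < r := zero_le.trans_lt hsr
  have hρ : |((s / r : ℝ≥0) : ℝ)| < 1 := by
    rw [NNReal.abs_eq]
    exact_mod_cast (div_lt_one hr).2 hsr
  obtain ⟨B, hB⟩ := (tendsto_pow_const_mul_const_pow_of_abs_lt_one k hρ).bddAbove_range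
  refine ⟨B.toNNReal, fun m ↦ ?_⟩
  have hm : (m : ℝ≥0) ^ k * (s / r) ^ m ≤ B.toNNReal :=
    NNReal.le_toNNReal_of_coe_le (by simpa using hB ⟨m, rfl⟩)
  calc (m : ℝ≥0) ^ k * s ^ m = m ^ k * (s / r) ^ m * r ^ m := by
        rw [mul_assoc, ← mul_pow, div_mul_cancel₀ s hr.ne']
    _ ≤ B.toNNReal * r ^ m := by gcongr

lemma exists_splittingConstant_le_mul_pow {r : ℝ≥0} (hr : 1 < r) :
    ∃ κ : ℝ≥0, ∀ m : ℕ, 1 ≤ m → ∃ k, 1 ≤ k ∧ k ≤ m ∧ splittingConstant m k ≤ κ * r ^ m := by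
  obtain ⟨n, hn⟩ := pow_unbounded_of_one_lt 2 hr
  have hn0 : n ≠ 0 := by rintro rfl; norm_num at hn
  set s : ℝ≥0 := 2 ^ (1 / n : ℝ)
  have hs1 : 1 ≤ s := NNReal.one_le_rpow one_le_two (by positivity)
  have hsr : s < r := by
    rwa [show s = 2 ^ (1 / n : ℝ) from rfl, one_div,
      NNReal.rpow_inv_lt_iff (by positivity), NNReal.rpow_natCast]
  obtain ⟨C, hC⟩ := exists_forall_pow_mul_pow_le n hsr
  refine ⟨6 ^ n * C, fun m hm ↦ ⟨min n m, by omega, min_le_right _ _, ?_⟩⟩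
  have hm1 : (1 : ℝ≥0) ≤ m := by exact_mod_cast hm
  have hpow : ((m : ℝ≥0) ^ min n m) ^ (1 / 2 : ℝ) ≤ m ^ n :=
    calc _ ≤ ((m : ℝ≥0) ^ min n m) ^ (1 : ℝ) := by
          gcongr
          · exact one_le_pow₀ hm1
          · norm_num
      _ ≤ m ^ n := by
          rw [NNReal.rpow_one]
          exact pow_le_pow_right₀ hm1 (min_le_left _ _)
  have htwo : ((2 : ℝ≥0) ^ (m - min n m)) ^ (1 / (min n m : ℕ) : ℝ) ≤ s ^ m := by
    rcases le_total m n with hmn | hnm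
    · simpa [min_eq_right hmn] using one_le_pow₀ hs1
    · rw [min_eq_left hnm, ← NNReal.rpow_natCast s m, ← NNReal.rpow_natCast, ← NNReal.rpow_mul,
        ← NNReal.rpow_mul, mul_comm]
      gcongr
      · exact one_le_two
      · omega
  calc splittingConstant m (min n m) ≤ (m : ℝ≥0) ^ n * s ^ m * 6 ^ n := by
        unfold splittingConstant
        gcongr
        · norm_num
        · exact min_le_left _ _
    _ ≤ C * r ^ m * 6 ^ n := mul_le_mul_left (hC m) _
    _ = _ := by ring

end Constants

lemma exists_rpow_sum_norm_rpow_bhExponent_le {r : ℝ} (hr : 1 < r) :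
    ∃ κ : ℝ, 0 < κ ∧ ∀ (ι : Type*) [Fintype ι] [DecidableEq ι] {m : ℕ}, 1 ≤ m →
      ∀ (c : (ι → ℕ) → ℂ) {M : ℝ},
        (∀ z : ι → ℂ, ‖z‖ ≤ 1 → ‖∑ α ∈ multiIndices ι m, c α * monom z α‖ ≤ M) →
          (∑ α ∈ multiIndices ι m, ‖c α‖ ^ bhExponent m) ^ (1 / bhExponent m) ≤ κ * r ^ m * M := by
  lift r to ℝ≥0 using zero_le_one.trans hr.le
  obtain ⟨κ, hκ⟩ := exists_splittingConstant_le_mul_pow (r := r) (by exact_mod_cast hr)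
  refine ⟨κ + 1, by positivity, fun ι _ _ m hm c M hM ↦ ?_⟩
  lift M to ℝ≥0 using (norm_nonneg _).trans (hM 0 (by simp))
  obtain ⟨k, hk, hkm, hbound⟩ := hκ m hm
  have h : (∑ α ∈ multiIndices ι m, ‖c α‖₊ ^ bhExponent m) ^ (1 / bhExponent m) ≤
      (κ + 1) * r ^ m * M :=
    calc _ ≤ splittingConstant m k * M := rpow_sum_nnnorm_rpow_bhExponent_le hk hkm c hM
      _ ≤ κ * r ^ m * M := mul_le_mul_left hbound M
      _ ≤ (κ + 1) * r ^ m * M := by gcongr; exact le_self_add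
  simpa using NNReal.coe_le_coe.2 h

section Supremum

lemma le_biSup_of_bddAbove_image {α : Type*} {f : α → ℝ} (hf : ∀ z, 0 ≤ f z) {s : Set α}
    (hs : BddAbove (f '' s)) {w : α} (hw : w ∈ s) : f w ≤ ⨆ z ∈ s, f z := by
  calc f w ≤ ⨆ z : s, f z := le_ciSup_set hs hw
    _ = ⨆ z ∈ s, f z := ciSup_subtype_fun (Set.image_eq_range f s ▸ hs)
        (Real.sSup_empty.trans_le (Real.iSup_nonneg fun z ↦ hf z))

lemma norm_sum_mul_monom_le_iSup {ι : Type*} [Fintype ι] (A : Finset (ι → ℕ))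
    (c : (ι → ℕ) → ℂ) {w : ι → ℂ} (hw : ‖w‖ ≤ 1) :
    ‖∑ α ∈ A, c α * monom w α‖ ≤
      ⨆ z ∈ {z : ι → ℂ | ∀ j, ‖z j‖ ≤ 1}, ‖∑ α ∈ A, c α * monom z α‖ := by
  have hball : {z : ι → ℂ | ∀ j, ‖z j‖ ≤ 1} = Metric.closedBall 0 1 := by
    ext z; simp [pi_norm_le_iff_of_nonneg]
  have hcont : Continuous fun z : ι → ℂ ↦ ‖∑ α ∈ A, c α * monom z α‖ := by
    unfold monom; fun_prop
  rw [hball]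
  exact le_biSup_of_bddAbove_image (fun _ ↦ norm_nonneg _)
    ((isCompact_closedBall 0 1).bddAbove_image hcont.continuousOn) (by simpa using hw)

end Supremum

end BohnenblustHille

/-- **Subexponential Bohnenblust–Hille constants (Bayart–Pellegrino–Seoane).**
For every `ε > 0` there is `κ > 0` such that for all `m, N ≥ 1` and every
`m`-homogeneous polynomial `P(z) = ∑_{|α|=m} c_α z^α` in `N` complex variables,
`(∑_{|α|=m} |c_α|^{2m/(m+1)})^{(m+1)/(2m)} ≤ κ (1+ε)^m · sup_{polydisc} |P|`. -/
theorem bohnenblust_hille_subexponential (ε : ℝ) (hε : 0 < ε) :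
    ∃ κ : ℝ, 0 < κ ∧ ∀ (m N : ℕ), 1 ≤ m → 1 ≤ N → ∀ c : (Fin N → ℕ) → ℂ,
      (∑ α ∈ Finset.Nat.antidiagonalTuple N m,
          ‖c α‖ ^ ((2 * m : ℝ) / (m + 1))) ^ (((m : ℝ) + 1) / (2 * m))
        ≤ κ * (1 + ε) ^ m *
          ⨆ z ∈ {z : Fin N → ℂ | ∀ j, ‖z j‖ ≤ 1},
            ‖∑ α ∈ Finset.Nat.antidiagonalTuple N m,
              c α * ∏ j, z j ^ α j‖ := by
  obtain ⟨κ, hκ, hbound⟩ :=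
    BohnenblustHille.exists_rpow_sum_norm_rpow_bhExponent_le (lt_add_of_pos_right 1 hε)
  refine ⟨κ, hκ, fun m N hm _ c ↦ ?_⟩
  rw [← piAntidiag_univ_fin_eq_antidiagonalTuple, ← one_div_div (2 * m : ℝ)]
  exact hbound (Fin N) hm c fun z hz ↦ BohnenblustHille.norm_sum_mul_monom_le_iSup _ c hz
end

section
/- (Hypercontractive L^p–L² comparison for homogeneous polynomials on the torus.) For every p with 1 ≤ p ≤ 2 there exists a constant c_p > 0 such that for all m, N ≥ 1 and every m-homogeneous polynomial P(w) = ∑_{|α|=m} c_α w^α in N complex variables, (∑_{|α|=m} |c_α|²)^{1/2} ≤ c_p^m · (∫_{𝕋^N} |P(w)|^p dσ(w))^{1/p}, where σ is the normalized Haar measure on 𝕋^N. -/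
open Finset MeasureTheory Real

/-!
The square of `P = ∑ c_α w^α`, `|α| ≤ m`, has coefficients `∑_{α+β=γ} c_α c_β` with at most
`∏ (γ_j + 1) ≤ 2^|γ| ≤ 4^m` terms, so Parseval for `P²` and Cauchy–Schwarz give
`‖P‖₄ ≤ 2^(m/2) ‖P‖₂`. By log-convexity of `s ↦ ∫ |P|^s`, the norm `‖P‖₂` is bounded by a geometric
mean of `‖P‖_p` and `‖P‖₄`; inserting the previous bound, a power of `‖P‖₂` cancels and leaves
`‖P‖₂ ≤ 2^((2/p - 1) m) ‖P‖_p`.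
-/

section Interpolation

variable {Ω : Type*} [MeasurableSpace Ω] {μ : Measure Ω} {f g : Ω → ℝ} {a b p q r K : ℝ}

lemma integral_rpow_mul_rpow_le (hf : Integrable f μ) (hg : Integrable g μ)
    (hf₀ : ∀ x, 0 ≤ f x) (hg₀ : ∀ x, 0 ≤ g x) (ha : 0 ≤ a) (hb : 0 ≤ b) (hab : a + b = 1) :
    ∫ x, f x ^ a * g x ^ b ∂μ ≤ (∫ x, f x ∂μ) ^ a * (∫ x, g x ∂μ) ^ b := by
  have hfg_meas : AEStronglyMeasurable (fun x ↦ f x ^ a * g x ^ b) μ :=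
    ((hf.aemeasurable.pow_const a).mul (hg.aemeasurable.pow_const b)).aestronglyMeasurable
  have hf_int := integral_nonneg (μ := μ) (f := f) hf₀
  have hg_int := integral_nonneg (μ := μ) (f := g) hg₀
  rw [integral_eq_lintegral_of_nonneg_ae (.of_forall fun x ↦
    mul_nonneg (rpow_nonneg (hf₀ x) a) (rpow_nonneg (hg₀ x) b)) hfg_meas]
  refine ENNReal.toReal_le_of_le_ofReal (by positivity) ?_
  calc ∫⁻ x, ENNReal.ofReal (f x ^ a * g x ^ b) ∂μ
      = ∫⁻ x, ENNReal.ofReal (f x) ^ a * ENNReal.ofReal (g x) ^ b ∂μ := by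
        refine lintegral_congr fun x ↦ ?_
        rw [ENNReal.ofReal_mul (rpow_nonneg (hf₀ x) a),
          ENNReal.ofReal_rpow_of_nonneg (hf₀ x) ha, ENNReal.ofReal_rpow_of_nonneg (hg₀ x) hb]
    _ ≤ (∫⁻ x, ENNReal.ofReal (f x) ∂μ) ^ a * (∫⁻ x, ENNReal.ofReal (g x) ∂μ) ^ b :=
        ENNReal.lintegral_mul_norm_pow_le hf.aemeasurable.ennreal_ofReal
          hg.aemeasurable.ennreal_ofReal ha hb hab
    _ = ENNReal.ofReal ((∫ x, f x ∂μ) ^ a * (∫ x, g x ∂μ) ^ b) := by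
        rw [← ofReal_integral_eq_lintegral_ofReal hf (.of_forall hf₀),
          ← ofReal_integral_eq_lintegral_ofReal hg (.of_forall hg₀),
          ENNReal.ofReal_rpow_of_nonneg hf_int ha, ENNReal.ofReal_rpow_of_nonneg hg_int hb,
          ← ENNReal.ofReal_mul (rpow_nonneg hf_int a)]

lemma integral_rpow_le_rpow_mul_rpow_of_le_of_le (hf₀ : ∀ x, 0 ≤ f x) (hp : 0 ≤ p) (hpr : p ≤ r)
    (hrq : r ≤ q) (hpq : p < q)
    (hfp : Integrable (fun x ↦ f x ^ p) μ) (hfq : Integrable (fun x ↦ f x ^ q) μ) :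
    ∫ x, f x ^ r ∂μ ≤
      (∫ x, f x ^ p ∂μ) ^ ((q - r) / (q - p)) * (∫ x, f x ^ q ∂μ) ^ ((r - p) / (q - p)) := by
  have hqp : 0 < q - p := sub_pos.2 hpq
  have ha : 0 ≤ (q - r) / (q - p) := div_nonneg (sub_nonneg.2 hrq) hqp.le
  have hb : 0 ≤ (r - p) / (q - p) := div_nonneg (sub_nonneg.2 hpr) hqp.le
  have hab : (q - r) / (q - p) + (r - p) / (q - p) = 1 := by field_simp; ring
  have hr : r = p * ((q - r) / (q - p)) + q * ((r - p) / (q - p)) := by field_simp; ring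
  have hsplit (x : Ω) :
      f x ^ r = (f x ^ p) ^ ((q - r) / (q - p)) * (f x ^ q) ^ ((r - p) / (q - p)) := by
    rw [← rpow_mul (hf₀ x), ← rpow_mul (hf₀ x), ← rpow_add_of_nonneg (hf₀ x) (mul_nonneg hp ha)
      (mul_nonneg (hp.trans hpq.le) hb), ← hr]
  simp_rw [hsplit]
  exact integral_rpow_mul_rpow_le hfp hfq (fun x ↦ rpow_nonneg (hf₀ x) p)
    (fun x ↦ rpow_nonneg (hf₀ x) q) ha hb hab

lemma rpow_one_sub_le_of_le_mul_rpow {x C t : ℝ} (hx : 0 < x) (h : x ≤ C * x ^ t) :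
    x ^ (1 - t) ≤ C := by
  rwa [rpow_sub hx, rpow_one, div_le_iff₀ (rpow_pos_of_pos hx t)]

lemma rpow_inv_le_of_le_rpow_mul_rpow {I J : ℝ} (hp : 0 < p) (hpr : p ≤ r) (hrq : r < q)
    (hK : 0 ≤ K) (hI : 0 ≤ I) (hJ : 0 ≤ J)
    (h : J ≤ I ^ ((q - r) / (q - p)) * (K * J ^ (q / r)) ^ ((r - p) / (q - p))) :
    J ^ (1 / r) ≤ K ^ ((r - p) / (p * (q - r))) * I ^ (1 / p) := by
  have hr : 0 < r := hp.trans_le hpr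
  have hqr : 0 < q - r := sub_pos.2 hrq
  have hqp : 0 < q - p := sub_pos.2 (hpr.trans_lt hrq)
  obtain rfl | hJ_pos := hJ.eq_or_lt
  · rw [zero_rpow (by positivity)]
    positivity
  set a := (q - r) / (q - p) with ha
  set b := (r - p) / (q - p) with hb
  have ha_pos : 0 < a := by positivity
  have hself : J ≤ (I ^ a * K ^ b) * J ^ (q / r * b) := by
    rwa [mul_rpow hK (by positivity), ← rpow_mul hJ, ← mul_assoc] at h
  have hexp : 1 - q / r * b = p * a / r := by rw [ha, hb]; field_simp; ring
  have hcancel : J ^ (p * a / r) ≤ I ^ a * K ^ b :=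
    hexp ▸ rpow_one_sub_le_of_le_mul_rpow hJ_pos hself
  calc J ^ (1 / r) = (J ^ (p * a / r)) ^ (1 / (p * a)) := by
        rw [← rpow_mul hJ]; congr 1; field_simp
    _ ≤ (I ^ a * K ^ b) ^ (1 / (p * a)) := by gcongr
    _ = K ^ ((r - p) / (p * (q - r))) * I ^ (1 / p) := by
        rw [mul_rpow (by positivity) (by positivity), ← rpow_mul hI, ← rpow_mul hK, mul_comm]
        congr 2
        · rw [ha, hb]; field_simp
        · field_simp

theorem rpow_integral_rpow_le_of_integral_rpow_le (hf₀ : ∀ x, 0 ≤ f x)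
    (hp : 0 < p) (hpr : p ≤ r) (hrq : r < q) (hK : 0 ≤ K)
    (hfp : Integrable (fun x ↦ f x ^ p) μ) (hfq : Integrable (fun x ↦ f x ^ q) μ)
    (hrev : ∫ x, f x ^ q ∂μ ≤ K * (∫ x, f x ^ r ∂μ) ^ (q / r)) :
    (∫ x, f x ^ r ∂μ) ^ (1 / r) ≤
      K ^ ((r - p) / (p * (q - r))) * (∫ x, f x ^ p ∂μ) ^ (1 / p) := by
  have hint_nonneg (s : ℝ) : 0 ≤ ∫ x, f x ^ s ∂μ := integral_nonneg fun x ↦ rpow_nonneg (hf₀ x) s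
  have hpq : p < q := hpr.trans_lt hrq
  refine rpow_inv_le_of_le_rpow_mul_rpow hp hpr hrq hK (hint_nonneg p) (hint_nonneg r) ?_
  calc ∫ x, f x ^ r ∂μ
      ≤ (∫ x, f x ^ p ∂μ) ^ ((q - r) / (q - p)) * (∫ x, f x ^ q ∂μ) ^ ((r - p) / (q - p)) :=
        integral_rpow_le_rpow_mul_rpow_of_le_of_le hf₀ hp.le hpr hrq.le hpq hfp hfq
    _ ≤ _ := mul_le_mul_of_nonneg_left
        (rpow_le_rpow (hint_nonneg q) hrev (div_nonneg (sub_nonneg.2 hpr) (sub_pos.2 hpq).le))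
        (rpow_nonneg (hint_nonneg p) _)

end Interpolation

open scoped Pointwise in
lemma sq_sum_smul_eq_sum_add {R S G : Type*} [CommSemiring R] [Semiring S] [Algebra R S] [Add G]
    [DecidableEq G] {e : G → S} (he_add : ∀ a b, e (a + b) = e a * e b) (A : Finset G)
    (c : G → R) :
    (∑ a ∈ A, c a • e a) ^ 2 =
      ∑ s ∈ A + A, (∑ x ∈ A ×ˢ A with x.1 + x.2 = s, c x.1 * c x.2) • e s := by
  have hmaps : ∀ x ∈ A ×ˢ A, x.1 + x.2 ∈ A + A := fun x hx ↦
    add_mem_add (mem_product.1 hx).1 (mem_product.1 hx).2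
  rw [sq, sum_mul_sum, ← sum_product', ← sum_fiberwise_of_maps_to hmaps]
  refine sum_congr rfl fun s _ ↦ ?_
  rw [sum_smul]
  refine sum_congr rfl fun x hx ↦ ?_
  rw [← (mem_filter.1 hx).2, he_add, smul_mul_smul_comm]

section Orthonormal

variable {𝕜 X G : Type*} [RCLike 𝕜] [TopologicalSpace X] [CompactSpace X] [MeasurableSpace X]
  [BorelSpace X] {μ : Measure X} [IsFiniteMeasure μ] {e : G → C(X, 𝕜)}

lemma norm_toLp_two_sq (f : C(X, 𝕜)) :
    ‖ContinuousMap.toLp (E := 𝕜) 2 μ 𝕜 f‖ ^ 2 = ∫ x, ‖f x‖ ^ 2 ∂μ := by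
  have h : ((‖ContinuousMap.toLp (E := 𝕜) 2 μ 𝕜 f‖ ^ 2 : ℝ) : 𝕜) =
      ((∫ x, ‖f x‖ ^ 2 ∂μ : ℝ) : 𝕜) := by
    rw [RCLike.ofReal_pow, ← inner_self_eq_norm_sq_to_K (𝕜 := 𝕜), ContinuousMap.inner_toLp,
      ← integral_ofReal]
    simp only [RCLike.mul_conj, RCLike.ofReal_pow]
  exact_mod_cast h

lemma integral_norm_sq_sum_smul
    (he : Orthonormal 𝕜 fun a ↦ ContinuousMap.toLp (E := 𝕜) 2 μ 𝕜 (e a))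
    (A : Finset G) (c : G → 𝕜) :
    ∫ x, ‖(∑ a ∈ A, c a • e a) x‖ ^ 2 ∂μ = ∑ a ∈ A, ‖c a‖ ^ 2 := by
  rw [← norm_toLp_two_sq, map_sum]
  simp only [map_smul]
  have h := he.inner_sum c c A
  rw [inner_self_eq_norm_sq_to_K] at h
  simp only [RCLike.conj_mul] at h
  exact_mod_cast h

variable [DecidableEq G] [Add G]

open scoped Pointwise in
theorem integral_norm_sum_pow_four_le
    (he : Orthonormal 𝕜 fun a ↦ ContinuousMap.toLp (E := 𝕜) 2 μ 𝕜 (e a))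
    (he_add : ∀ a b, e (a + b) = e a * e b) {A : Finset G} {K : ℕ}
    (hK : ∀ s, #{x ∈ A ×ˢ A | x.1 + x.2 = s} ≤ K) (c : G → 𝕜) :
    ∫ x, ‖(∑ a ∈ A, c a • e a) x‖ ^ 4 ∂μ ≤ K * (∑ a ∈ A, ‖c a‖ ^ 2) ^ 2 := by
  calc ∫ x, ‖(∑ a ∈ A, c a • e a) x‖ ^ 4 ∂μ
      = ∫ x, ‖((∑ a ∈ A, c a • e a) ^ 2) x‖ ^ 2 ∂μ := by
        simp only [ContinuousMap.pow_apply, norm_pow, ← pow_mul]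
    _ = ∑ s ∈ A + A, ‖∑ x ∈ A ×ˢ A with x.1 + x.2 = s, c x.1 * c x.2‖ ^ 2 := by
        rw [sq_sum_smul_eq_sum_add he_add, integral_norm_sq_sum_smul he]
    _ ≤ ∑ s ∈ A + A, K * ∑ x ∈ A ×ˢ A with x.1 + x.2 = s, ‖c x.1‖ ^ 2 * ‖c x.2‖ ^ 2 := by
        gcongr with s
        calc _ ≤ (∑ x ∈ A ×ˢ A with x.1 + x.2 = s, ‖c x.1 * c x.2‖) ^ 2 := by
              gcongr; exact norm_sum_le _ _
          _ ≤ #{x ∈ A ×ˢ A | x.1 + x.2 = s} *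
                ∑ x ∈ A ×ˢ A with x.1 + x.2 = s, ‖c x.1 * c x.2‖ ^ 2 :=
              sq_sum_le_card_mul_sum_sq
          _ ≤ _ := by
              simp only [norm_mul, mul_pow]
              gcongr
              exact hK s
    _ = K * (∑ a ∈ A, ‖c a‖ ^ 2) ^ 2 := by
        rw [← mul_sum, sum_fiberwise_of_maps_to, sq (∑ a ∈ A, ‖c a‖ ^ 2), sum_mul_sum,
          ← sum_product']
        exact fun x hx ↦ add_mem_add (mem_product.1 hx).1 (mem_product.1 hx).2

theorem sqrt_sum_norm_sq_le_rpow_integral_norm_rpow {p : ℝ} (hp : 0 < p) (hp2 : p ≤ 2)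
    (he : Orthonormal 𝕜 fun a ↦ ContinuousMap.toLp (E := 𝕜) 2 μ 𝕜 (e a))
    (he_add : ∀ a b, e (a + b) = e a * e b) {A : Finset G} {K : ℕ}
    (hK : ∀ s, #{x ∈ A ×ˢ A | x.1 + x.2 = s} ≤ K) (c : G → 𝕜) :
    √(∑ a ∈ A, ‖c a‖ ^ 2) ≤
      (K : ℝ) ^ ((2 - p) / (2 * p)) *
        (∫ x, ‖(∑ a ∈ A, c a • e a) x‖ ^ p ∂μ) ^ (1 / p) := by
  set P := ∑ a ∈ A, c a • e a
  have hparseval : ∫ x, ‖P x‖ ^ (2 : ℝ) ∂μ = ∑ a ∈ A, ‖c a‖ ^ 2 := by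
    simpa only [rpow_ofNat] using integral_norm_sq_sum_smul he A c
  have hfour : ∫ x, ‖P x‖ ^ (4 : ℝ) ∂μ ≤ K * (∫ x, ‖P x‖ ^ (2 : ℝ) ∂μ) ^ (4 / 2 : ℝ) := by
    rw [hparseval, show (4 / 2 : ℝ) = 2 by norm_num]
    simpa only [rpow_ofNat] using integral_norm_sum_pow_four_le he he_add hK c
  have hint {s : ℝ} (hs : 0 ≤ s) : Integrable (fun x ↦ ‖P x‖ ^ s) μ :=
    (P.continuous.norm.rpow_const fun _ ↦ .inr hs).integrable_of_hasCompactSupport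
      (.of_compactSpace _)
  have hbound := rpow_integral_rpow_le_of_integral_rpow_le (fun x ↦ norm_nonneg (P x)) hp hp2
    (by norm_num) K.cast_nonneg (hint hp.le) (hint (by norm_num)) hfour
  rw [hparseval, ← sqrt_eq_rpow] at hbound
  convert! hbound using 3
  ring

end Orthonormal

section MultiIndex

variable {ι : Type*} [Fintype ι]

lemma card_Iic_le_two_pow_sum [DecidableEq ι] (γ : ι → ℕ) : #(Iic γ) ≤ 2 ^ ∑ j, γ j := by
  rw [Pi.card_Iic, ← prod_pow_eq_pow_sum]
  gcongr with j
  rw [Nat.card_Iic]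
  exact Nat.lt_two_pow_self

lemma card_filter_add_eq_le_card_Iic [DecidableEq ι] (A : Finset (ι → ℕ)) (γ : ι → ℕ) :
    #{x ∈ A ×ˢ A | x.1 + x.2 = γ} ≤ #(Iic γ) := by
  refine card_le_card_of_injOn Prod.fst (fun x hx ↦ ?_) fun x hx y hy hxy ↦ ?_
  · rw [← (mem_filter.1 hx).2]
    exact mem_Iic.2 le_self_add
  · have hsum : x.1 + x.2 = x.1 + y.2 :=
      (mem_filter.1 hx).2.trans <| hxy ▸ (mem_filter.1 hy).2.symm
    exact Prod.ext hxy (add_left_cancel hsum)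

lemma card_filter_add_eq_le_four_pow {A : Finset (ι → ℕ)} {m : ℕ}
    (hA : ∀ α ∈ A, ∑ j, α j ≤ m) (γ : ι → ℕ) :
    #{x ∈ A ×ˢ A | x.1 + x.2 = γ} ≤ 4 ^ m := by
  classical
  obtain hempty | ⟨x, hx⟩ := (A ×ˢ A).filter (fun x ↦ x.1 + x.2 = γ) |>.eq_empty_or_nonempty
  · simp [hempty]
  obtain ⟨hxA, rfl⟩ := mem_filter.1 hx
  have hdeg : ∑ j, (x.1 + x.2) j ≤ 2 * m := by
    simp only [Pi.add_apply, sum_add_distrib, two_mul]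
    exact add_le_add (hA _ (mem_product.1 hxA).1) (hA _ (mem_product.1 hxA).2)
  calc _ ≤ #(Iic (x.1 + x.2)) := card_filter_add_eq_le_card_Iic A _
    _ ≤ 2 ^ ∑ j, (x.1 + x.2) j := card_Iic_le_two_pow_sum _
    _ ≤ 2 ^ (2 * m) := by gcongr; norm_num
    _ = 4 ^ m := by rw [pow_mul]; norm_num

end MultiIndex

section Torus

variable {ι : Type*} [Fintype ι]

-- `UnitAddTorus.orthonormal_mFourier` refers to this measure and not to the global `volume`
-- instance on `AddCircle`, which is only propositionally equal to it.
noncomputable local instance : MeasureSpace UnitAddCircle := ⟨AddCircle.haarAddCircle⟩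

local instance : IsProbabilityMeasure (volume : Measure UnitAddCircle) :=
  inferInstanceAs (IsProbabilityMeasure AddCircle.haarAddCircle)

/-- The monomial `w^α` as a function on the torus, the point `x` of `UnitAddTorus ι` standing for
`w_j = exp (2πi x_j)`. -/
noncomputable def torusMonomial (α : ι → ℕ) : C(UnitAddTorus ι, ℂ) :=
  UnitAddTorus.mFourier fun j ↦ (α j : ℤ)

lemma torusMonomial_add (α β : ι → ℕ) :
    torusMonomial (α + β) = torusMonomial α * torusMonomial β := by
  ext x
  rw [ContinuousMap.mul_apply, torusMonomial, torusMonomial, torusMonomial,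
    ← UnitAddTorus.mFourier_add]
  congr 2

lemma orthonormal_torusMonomial :
    Orthonormal ℂ fun α : ι → ℕ ↦
      ContinuousMap.toLp (E := ℂ) 2 volume ℂ (torusMonomial α) := by
  have hinj : Function.Injective fun (α : ι → ℕ) j ↦ (α j : ℤ) :=
    Nat.cast_injective.comp_left
  exact UnitAddTorus.orthonormal_mFourier.comp _ hinj

lemma torusMonomial_coe_div_two_pi (α : ι → ℕ) (θ : ι → ℝ) :
    torusMonomial α (fun j ↦ ((θ j / (2 * π) : ℝ) : UnitAddCircle)) =
      ∏ j, Complex.exp (Complex.I * θ j) ^ α j := by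
  rw [torusMonomial, UnitAddTorus.mFourier, ContinuousMap.coe_mk]
  refine prod_congr rfl fun j _ ↦ ?_
  rw [fourier_coe_apply, ← Complex.exp_nat_mul]
  congr 1
  push_cast
  field_simp

open scoped Pointwise in
lemma setIntegral_pi_Icc_eq_integral_unitAddTorus {E : Type*} [NormedAddCommGroup E]
    [NormedSpace ℝ E] (f : UnitAddTorus ι → E) {T : ℝ} (hT : 0 < T) :
    ∫ θ : ι → ℝ in Set.univ.pi fun _ ↦ Set.Icc 0 T,
      f (fun j ↦ ((θ j / T : ℝ) : UnitAddCircle)) = T ^ Fintype.card ι • ∫ x, f x := by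
  have hbox : T • (Set.univ.pi fun _ : ι ↦ Set.Icc (0 : ℝ) 1) =
      Set.univ.pi fun _ ↦ Set.Icc 0 T := by
    rw [Set.smul_set_univ_pi]
    simp [Pi.smul_def, LinearOrderedField.smul_Icc hT]
  have hcube : (Set.univ.pi fun _ : ι ↦ Set.Icc (0 : ℝ) 1) =ᵐ[volume]
      {x | ∀ j, x j ∈ Set.Ioc (0 : ℝ) (0 + 1)} := by
    simpa [volume_pi, Set.pi, Pi.le_def, ← Set.pi_univ_Icc] using
      (Measure.univ_pi_Ioc_ae_eq_Icc (μ := fun _ : ι ↦ (volume : Measure ℝ))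
        (f := fun _ ↦ 0) (g := fun _ ↦ 1)).symm
  have hscale := Measure.setIntegral_comp_smul_of_pos volume
    (fun θ : ι → ℝ ↦ f fun j ↦ ((θ j / T : ℝ) : UnitAddCircle))
      (Set.univ.pi fun _ : ι ↦ Set.Icc (0 : ℝ) 1) hT
  simp only [Pi.smul_apply, smul_eq_mul, mul_div_cancel_left₀ _ hT.ne', hbox,
    Module.finrank_fintype_fun_eq_card, setIntegral_congr_set hcube] at hscale
  rw [UnitAddTorus.integral_preimage f fun _ ↦ 0, hscale, smul_inv_smul₀ (by positivity)]

lemma setIntegral_norm_sum_exp_rpow (A : Finset (ι → ℕ)) (c : (ι → ℕ) → ℂ) (p : ℝ) :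
    ∫ θ : ι → ℝ in Set.univ.pi fun _ ↦ Set.Icc 0 (2 * π),
        ‖(∑ α ∈ A, c α * ∏ j, Complex.exp (Complex.I * θ j) ^ α j : ℂ)‖ ^ p =
      (2 * π) ^ Fintype.card ι * ∫ x, ‖(∑ α ∈ A, c α • torusMonomial α) x‖ ^ p := by
  rw [← smul_eq_mul (_ ^ _), ← setIntegral_pi_Icc_eq_integral_unitAddTorus _ two_pi_pos]
  simp only [ContinuousMap.sum_apply, ContinuousMap.smul_apply, smul_eq_mul,
    torusMonomial_coe_div_two_pi]

theorem hypercontractive_Lp_L2_general {p : ℝ} (hp : 0 < p) (hp2 : p ≤ 2) {m : ℕ}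
    {A : Finset (ι → ℕ)} (hA : ∀ α ∈ A, ∑ j, α j ≤ m) (c : (ι → ℕ) → ℂ) :
    √(∑ α ∈ A, ‖c α‖ ^ 2) ≤
      ((2 : ℝ) ^ (2 / p - 1)) ^ m *
        ((1 / (2 * π) ^ Fintype.card ι) *
          ∫ θ : ι → ℝ in Set.univ.pi fun _ ↦ Set.Icc 0 (2 * π),
            ‖(∑ α ∈ A, c α * ∏ j, Complex.exp (Complex.I * θ j) ^ α j : ℂ)‖ ^ p) ^ (1 / p) := by
  have hconst : ((4 ^ m : ℕ) : ℝ) ^ ((2 - p) / (2 * p)) = (2 ^ (2 / p - 1)) ^ m := by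
    calc ((4 ^ m : ℕ) : ℝ) ^ ((2 - p) / (2 * p)) = (((2 : ℝ) ^ 2) ^ ((2 - p) / (2 * p))) ^ m := by
          rw [rpow_pow_comm (by positivity)]
          norm_num
      _ = (2 ^ (2 / p - 1)) ^ m := by
          rw [← rpow_natCast 2 2, ← rpow_mul zero_le_two]
          congr 2
          push_cast
          field_simp
  rw [setIntegral_norm_sum_exp_rpow, one_div, inv_mul_cancel_left₀ (by positivity), ← hconst]
  exact sqrt_sum_norm_sq_le_rpow_integral_norm_rpow hp hp2 orthonormal_torusMonomial
    torusMonomial_add (card_filter_add_eq_le_four_pow hA) c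

end Torus

/-- **Hypercontractive `L^p`–`L²` comparison on the torus.** For every `1 ≤ p ≤ 2`
there is `c_p > 0`, independent of `m` and `N`, such that for every `m`-homogeneous
polynomial `P(w) = ∑_{|α|=m} c_α w^α` in `N` complex variables,
`(∑_{|α|=m} |c_α|²)^{1/2} ≤ c_p^m (∫_{𝕋^N} |P(w)|^p dσ(w))^{1/p}`,
the torus `𝕋^N` being parametrized by `w_j = e^{iθ_j}`, `θ ∈ [0,2π]^N`, with
normalized Haar measure `dσ = dθ/(2π)^N`. -/
theorem hypercontractive_Lp_L2 (p : ℝ) (hp1 : 1 ≤ p) (hp2 : p ≤ 2) :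
    ∃ cp : ℝ, 0 < cp ∧ ∀ (m N : ℕ), 1 ≤ m → 1 ≤ N → ∀ c : (Fin N → ℕ) → ℂ,
      Real.sqrt (∑ α ∈ Finset.Nat.antidiagonalTuple N m, ‖c α‖ ^ 2)
        ≤ cp ^ m *
          ((1 / (2 * π) ^ N) *
            ∫ θ : Fin N → ℝ in Set.univ.pi fun _ => Set.Icc 0 (2 * π),
              ‖(∑ α ∈ Finset.Nat.antidiagonalTuple N m,
                c α * ∏ j, Complex.exp (Complex.I * θ j) ^ α j : ℂ)‖ ^ p) ^ (1 / p) := by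
  refine ⟨2 ^ (2 / p - 1), by positivity, fun m N _ _ c ↦ ?_⟩
  simpa only [Fintype.card_fin] using hypercontractive_Lp_L2_general (zero_lt_one.trans_le hp1) hp2
    (fun α hα ↦ (Finset.Nat.mem_antidiagonalTuple.1 hα).le) c
end

section
/- Let m ≥ 2 and M ≥ 1. Let L be a symmetric continuous m-linear form on the Banach space c₀ of complex null sequences (with the sup norm), let P(z) = L(z,…,z) be the associated m-homogeneous polynomial, and for each finitely supported multi-index α ∈ ℕ₀^{(ℕ)} with |α| = m let c_α(P) = (m!/∏_n α_n!) · L(e^α), where L(e^α) is L evaluated at the standard unit vector e_n repeated α_n times for each n. Then, with Λ_M = {α : |α| = m and var(α) ≤ M}, one has (∑_{α ∈ Λ_M} |c_α(P)|^{2m/(m+1)})^{(m+1)/(2m)} ≤ e · 2^{M/2} · m^{(M+1)/2} · sup_{‖z‖_∞ ≤ 1} |P(z)|. -/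
/-!
Write `m = n + 1`. By Blei's inequality, itself a consequence of the inequality between arithmetic
and geometric means, the `ℓ_{2m/(m+1)}` norm of the coefficients is at most `m^{1/2}` times the sum
over `k` of the `ℓ₂` norms of the coefficients of the polynomials `z ↦ L(e_k, z, …, z)`.

These `ℓ₂` norms are compared with `L¹` norms on the torus one variable at a time: for a polynomial
`f = ∑ a_j z ^ j` of degree at most `d`, the square of the average of `|f|` over the circle is at
least `|a_0|² + (2d)⁻¹ ∑_{j ≥ 1} |a_j|²`. A factor `(2d)^{1/2}` is thus lost only for the variables
that actually occur, which gives `(2n)^{M/2}` in total.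

On the torus, `∑_k |L(e_k, z, …, z)|` is the modulus of `L(w, z, …, z)` for a suitable `w` in the
unit ball, and Cauchy's estimate for `t ↦ P(z + t w)` on the circle of radius `1 / n` bounds it by
`(1 + 1 / n)^n ‖P‖ ≤ e ‖P‖`.
-/

open Finset

/-- The standard unit vector `e_k` in the space `c₀ = C₀(ℕ, ℂ)` of complex null
sequences with the sup norm. -/
noncomputable def c0UnitVector (k : ℕ) : ZeroAtInftyContinuousMap ℕ ℂ where
  toFun := Pi.single k 1
  continuous_toFun := continuous_of_discreteTopology
  zero_at_infty' := by
    rw [Filter.cocompact_eq_cofinite]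
    refine Filter.Tendsto.congr' ?_ tendsto_const_nhds
    filter_upwards [Filter.eventually_cofinite_ne k] with x hx
    simp [Pi.single_eq_of_ne hx]

section CircleAverage

open Real Metric ComplexConjugate

theorem norm_circleAverage_le {E : Type*} [NormedAddCommGroup E] [NormedSpace ℝ E]
    (f : ℂ → E) (c : ℂ) (R : ℝ) :
    ‖circleAverage f c R‖ ≤ circleAverage (fun z => ‖f z‖) c R := by
  simp only [circleAverage, norm_smul, smul_eq_mul, norm_of_nonneg (inv_nonneg.2 two_pi_pos.le)]
  gcongr
  exact intervalIntegral.norm_integral_le_integral_norm two_pi_pos.le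

theorem sqrt_sum_mul_circleAverage_sq_le {I : Type*} [Fintype I] {w : I → ℝ}
    (hw : ∀ i, 0 ≤ w i) {f : I → ℂ → ℝ} {c : ℂ} {R : ℝ}
    (hf : ∀ i, CircleIntegrable (f i) c R) :
    √(∑ i, w i * circleAverage (f i) c R ^ 2) ≤
      circleAverage (fun z => √(∑ i, w i * f i z ^ 2)) c R := by
  let G (z : ℂ) : EuclideanSpace ℝ I := WithLp.toLp 2 fun i => √(w i) • f i z
  have norm_toLp (x : I → ℝ) :
      ‖(WithLp.toLp 2 fun i => √(w i) • x i : EuclideanSpace ℝ I)‖ = √(∑ i, w i * x i ^ 2) := by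
    simp [EuclideanSpace.norm_eq, mul_pow, sq_sqrt (hw _)]
  have hG : CircleIntegrable G c R := by
    refine ⟨?_, ?_⟩ <;> refine MeasureTheory.Integrable.of_eval_piLp fun i => ?_
    exacts [(hf i).1.const_mul _, (hf i).2.const_mul _]
  have coord : circleAverage G c R =
      WithLp.toLp 2 fun i => √(w i) • circleAverage (f i) c R := by
    ext i
    let coord_i : EuclideanSpace ℝ I →L[ℝ] ℝ := EuclideanSpace.proj i
    exact (coord_i.circleAverage_comp_comm hG).symm.trans (circleAverage_fun_smul (a := √(w i)))
  calc √(∑ i, w i * circleAverage (f i) c R ^ 2)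
      = ‖circleAverage G c R‖ := by rw [coord, norm_toLp]
    _ ≤ circleAverage (fun z => ‖G z‖) c R := norm_circleAverage_le G c R
    _ = _ := by simp only [G, norm_toLp]

theorem one_add_mul_ne_zero {β w : ℂ} (hβ : ‖β‖ < 1) (hw : ‖w‖ ≤ 1) : 1 + β * w ≠ 0 := by
  intro h
  have : ‖β * w‖ < 1 := by
    rw [norm_mul]
    exact mul_lt_one_of_nonneg_of_lt_one_left (norm_nonneg _) hβ hw
  rw [eq_neg_of_add_eq_zero_right h] at this
  simp at this

theorem norm_mul_inv_add_mul_inv_eq_one {β w : ℂ} (hβ : ‖β‖ < 1) (hw : ‖w‖ = 1) :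
    ‖β * w⁻¹ + (1 - (‖β‖ : ℂ) ^ 2) * (1 + conj β * w)⁻¹‖ = 1 := by
  have hw₀ : w ≠ 0 := norm_ne_zero_iff.1 (by simp [hw])
  have hden : 1 + conj β * w ≠ 0 := one_add_mul_ne_zero (by simpa using hβ) hw.le
  have quotient : β * w⁻¹ + (1 - (‖β‖ : ℂ) ^ 2) * (1 + conj β * w)⁻¹ =
      conj (1 + conj β * w) / (1 + conj β * w) := by
    rw [← Complex.mul_conj', map_add, map_one, map_mul, Complex.conj_conj,
      ← Complex.inv_eq_conj hw, eq_div_iff hden, add_mul, inv_mul_cancel_right₀ hden]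
    field_simp
    ring
  rw [quotient, norm_div, RCLike.norm_conj, div_self (norm_ne_zero_iff.2 hden)]

/- The mean value property turns `f 0` into the average of `(1 + conj β * z ^ j)⁻¹ * f z`; the
kernel by which `f` is then multiplied has modulus `1` on the circle. -/
theorem norm_add_mul_circleAverage_le {f : ℂ → ℂ} (hf : DiffContOnCl ℂ f (ball 0 1)) {β : ℂ}
    (hβ : ‖β‖ < 1) {j : ℕ} (hj : j ≠ 0) :
    ‖(1 - (‖β‖ : ℂ) ^ 2) * f 0 + β * circleAverage (fun z => (z ^ j)⁻¹ * f z) 0 1‖ ≤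
      circleAverage (fun z => ‖f z‖) 0 1 := by
  have hden : ∀ z ∈ closure (ball (0 : ℂ) 1), 1 + conj β * z ^ j ≠ 0 := fun z hz =>
    one_add_mul_ne_zero (by simpa using hβ) <| by
      rw [closure_ball _ one_ne_zero, mem_closedBall_zero_iff] at hz
      simpa using pow_le_one₀ (norm_nonneg z) hz
  have hg : DiffContOnCl ℂ (fun z => (1 + conj β * z ^ j)⁻¹ • f z) (ball 0 1) :=
    (DiffContOnCl.inv (Differentiable.diffContOnCl (by fun_prop)) hden).smul hf
  have mean_value : circleAverage (fun z => (1 + conj β * z ^ j)⁻¹ • f z) 0 1 = f 0 := by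
    rw [DiffContOnCl.circleAverage (by rwa [abs_one])]
    simp [hj]
  have sphere_subset : sphere (0 : ℂ) 1 ⊆ closure (ball 0 1) := by
    rw [closure_ball _ one_ne_zero]
    exact sphere_subset_closedBall
  have hint₁ : CircleIntegrable (fun z => (z ^ j)⁻¹ * f z) 0 1 :=
    ContinuousOn.circleIntegrable zero_le_one <| .mul (.inv₀ (by fun_prop)
      fun z hz => pow_ne_zero _ (ne_of_mem_sphere hz one_ne_zero))
      (hf.continuousOn.mono sphere_subset)
  have hint₂ : CircleIntegrable (fun z => (1 + conj β * z ^ j)⁻¹ • f z) 0 1 :=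
    (hg.continuousOn.mono sphere_subset).circleIntegrable zero_le_one
  rw [← mean_value, ← smul_eq_mul, ← smul_eq_mul, ← circleAverage_fun_smul,
    ← circleAverage_fun_smul, add_comm,
    ← circleAverage_fun_add hint₁.const_fun_smul hint₂.const_fun_smul]
  refine (norm_circleAverage_le _ _ _).trans_eq (circleAverage_congr_sphere fun z hz => ?_)
  have hz : ‖z ^ j‖ = 1 := by simp_all
  simp only [smul_eq_mul]
  rw [← mul_assoc, ← mul_assoc, ← add_mul, norm_mul, norm_mul_inv_add_mul_inv_eq_one hβ hz,
    one_mul]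

/- The left-hand side of `h` is largest at `t = y / (2 * x)`. -/
theorem sq_add_half_sq_le_sq {x y A : ℝ} (hx : 0 ≤ x) (hy : 0 ≤ y)
    (h : ∀ t, 0 ≤ t → t < 1 → (1 - t ^ 2) * x + t * y ≤ A) : x ^ 2 + y ^ 2 / 2 ≤ A ^ 2 := by
  rcases le_or_gt (2 * x) y with hxy | hxy
  · have := h (3 / 4) (by norm_num) (by norm_num)
    nlinarith
  · have hx₀ : 0 < x := by linarith
    have := h (y / (2 * x)) (by positivity) ((div_lt_one (by positivity)).2 hxy)
    calc x ^ 2 + y ^ 2 / 2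
        ≤ x ^ 2 + y ^ 2 / 2 + (y ^ 2 / (4 * x)) ^ 2 := le_add_of_nonneg_right (sq_nonneg _)
      _ = ((1 - (y / (2 * x)) ^ 2) * x + y / (2 * x) * y) ^ 2 := by
        field_simp
        ring
      _ ≤ A ^ 2 := by
        refine pow_le_pow_left₀ (add_nonneg (mul_nonneg (sub_nonneg.2 ?_) hx) ?_) this 2
        · exact pow_le_one₀ (by positivity) ((div_le_one (by positivity)).2 hxy.le)
        · positivity

theorem norm_sq_add_half_norm_circleAverage_sq_le {f : ℂ → ℂ}
    (hf : DiffContOnCl ℂ f (ball 0 1)) {j : ℕ} (hj : j ≠ 0) :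
    ‖f 0‖ ^ 2 + ‖circleAverage (fun z => (z ^ j)⁻¹ * f z) 0 1‖ ^ 2 / 2 ≤
      circleAverage (fun z => ‖f z‖) 0 1 ^ 2 := by
  refine sq_add_half_sq_le_sq (norm_nonneg _) (norm_nonneg _) fun t ht₀ ht₁ => ?_
  set b := circleAverage (fun z => (z ^ j)⁻¹ * f z) 0 1
  obtain ⟨u, hu, hfu⟩ := Complex.exists_norm_mul_eq_self (f 0)
  obtain ⟨v, hv, hbv⟩ := Complex.exists_norm_mul_eq_self b
  have hβ : ‖(t * (u * v⁻¹) : ℂ)‖ = t := by simp [hu, hv, abs_of_nonneg ht₀]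
  have aligned : (1 - (t : ℂ) ^ 2) * f 0 + t * (u * v⁻¹) * b =
      ((1 - t ^ 2) * ‖f 0‖ + t * ‖b‖ : ℝ) * u := by
    have hv₀ : v ≠ 0 := norm_ne_zero_iff.1 (by simp [hv])
    push_cast
    linear_combination (t ^ 2 - 1) * hfu - t * u * v⁻¹ * hbv + t * u * ‖b‖ * inv_mul_cancel₀ hv₀
  calc (1 - t ^ 2) * ‖f 0‖ + t * ‖b‖
      ≤ ‖(1 - (t : ℂ) ^ 2) * f 0 + t * (u * v⁻¹) * b‖ := by
        rw [aligned, norm_mul, hu, mul_one, Complex.norm_real]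
        exact le_norm_self _
    _ ≤ _ := by simpa only [hβ] using norm_add_mul_circleAverage_le hf (hβ.trans_lt ht₁) hj

theorem circleAverage_zpow_eq_zero {k : ℤ} (hk : k ≠ 0) :
    circleAverage (fun z : ℂ => z ^ k) 0 1 = 0 := by
  have integrand : Set.EqOn (fun z : ℂ => (z - 0)⁻¹ • z ^ k) (fun z => (z - 0) ^ (k - 1))
      (sphere 0 1) := fun z hz => by
    simp only [sub_zero, smul_eq_mul, zpow_sub_one₀ (ne_of_mem_sphere hz one_ne_zero), mul_comm]
  rw [circleAverage_eq_circleIntegral one_ne_zero,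
    circleIntegral.integral_congr zero_le_one integrand,
    circleIntegral.integral_sub_zpow_of_ne (by omega), smul_zero]

theorem circleAverage_inv_pow_mul_sum {d : ℕ} (a : Fin (d + 1) → ℂ) (j : Fin (d + 1)) :
    circleAverage (fun z => (z ^ (j : ℕ))⁻¹ * ∑ l, a l * z ^ (l : ℕ)) 0 1 = a j := by
  have laurent : Set.EqOn (fun z : ℂ => (z ^ (j : ℕ))⁻¹ * ∑ l, a l * z ^ (l : ℕ))
      (fun z => ∑ l, a l • z ^ ((l : ℤ) - j)) (sphere 0 1) := fun z hz => by
    simp only [mul_sum, smul_eq_mul, zpow_sub₀ (ne_of_mem_sphere hz one_ne_zero), zpow_natCast]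
    exact sum_congr rfl fun l _ => by ring
  have hint (l : Fin (d + 1)) : CircleIntegrable (fun z : ℂ => z ^ ((l : ℤ) - j)) 0 1 :=
    ContinuousOn.circleIntegrable zero_le_one <| continuousOn_id.zpow₀ _
      fun z hz => .inl (ne_of_mem_sphere hz one_ne_zero)
  rw [circleAverage_congr_sphere (by rwa [abs_one]),
    circleAverage_fun_sum fun l _ => (hint l).const_fun_smul, sum_eq_single j]
  · simp [circleAverage_const]
  · intro l _ hl
    rw [circleAverage_fun_smul, circleAverage_zpow_eq_zero, smul_zero]
    exact sub_ne_zero.2 fun h => hl (Fin.ext (by exact_mod_cast h))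
  · simp

theorem sum_norm_coeff_sq_le_circleAverage_sq {d : ℕ} (hd : d ≠ 0) (a : Fin (d + 1) → ℂ) :
    ∑ j, (if j = 0 then 1 else (2 * d : ℝ)⁻¹) * ‖a j‖ ^ 2 ≤
      circleAverage (fun z => ‖∑ l, a l * z ^ (l : ℕ)‖) 0 1 ^ 2 := by
  have hd₀ : (d : ℝ) ≠ 0 := Nat.cast_ne_zero.2 hd
  let f (z : ℂ) : ℂ := ∑ l, a l * z ^ (l : ℕ)
  have hf : DiffContOnCl ℂ f (ball 0 1) := Differentiable.diffContOnCl (by fun_prop)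
  have hf₀ : f 0 = a 0 := by simp [f, Fin.sum_univ_succ]
  calc ∑ j, (if j = 0 then 1 else (2 * d : ℝ)⁻¹) * ‖a j‖ ^ 2
      = (d : ℝ)⁻¹ * ∑ j : Fin d, (‖a 0‖ ^ 2 + ‖a j.succ‖ ^ 2 / 2) := by
        simp only [Fin.sum_univ_succ, Fin.succ_ne_zero, if_true, if_false, sum_add_distrib,
          ← mul_sum, ← sum_div, sum_const, card_univ, Fintype.card_fin, nsmul_eq_mul]
        field_simp
    _ ≤ (d : ℝ)⁻¹ * ∑ _j : Fin d, circleAverage (fun z => ‖f z‖) 0 1 ^ 2 := by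
        gcongr with j
        have := norm_sq_add_half_norm_circleAverage_sq_le hf (Fin.val_ne_zero_iff.2 j.succ_ne_zero)
        rwa [hf₀, circleAverage_inv_pow_mul_sum] at this
    _ = circleAverage (fun z => ‖f z‖) 0 1 ^ 2 := by
        simp [hd₀]

end CircleAverage

section Torus

open Real

variable {J K : Type*} [Fintype J] [Fintype K] {φ : J → ℂ → ℂ} {v : J → ℝ}

theorem sum_sqrt_mul_sum_norm_coeff_sq_le {I : Type*} [Fintype I] (hφ : ∀ j, Continuous (φ j))
    (hv : ∀ a : J → ℂ, ∑ j, v j * ‖a j‖ ^ 2 ≤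
      circleAverage (fun z => ‖∑ j, a j * φ j z‖) 0 1 ^ 2)
    {w : I → ℝ} (hw : ∀ i, 0 ≤ w i) {a : K → I → J → ℂ} {B : ℝ}
    (h : ∀ z : ℂ, ‖z‖ = 1 → ∑ k, √(∑ i, w i * ‖∑ j, a k i j * φ j z‖ ^ 2) ≤ B) :
    ∑ k, √(∑ i, w i * ∑ j, v j * ‖a k i j‖ ^ 2) ≤ B := by
  have hint {f : ℂ → ℝ} (hf : Continuous f) : CircleIntegrable f 0 1 :=
    hf.continuousOn.circleIntegrable zero_le_one
  calc ∑ k, √(∑ i, w i * ∑ j, v j * ‖a k i j‖ ^ 2)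
      ≤ ∑ k, √(∑ i, w i * circleAverage (fun z => ‖∑ j, a k i j * φ j z‖) 0 1 ^ 2) := by
        gcongr with k _ i
        exacts [hw i, hv (a k i)]
    _ ≤ ∑ k, circleAverage (fun z => √(∑ i, w i * ‖∑ j, a k i j * φ j z‖ ^ 2)) 0 1 := by
        gcongr with k
        exact sqrt_sum_mul_circleAverage_sq_le hw fun i => hint (by fun_prop)
    _ = circleAverage (fun z => ∑ k, √(∑ i, w i * ‖∑ j, a k i j * φ j z‖ ^ 2)) 0 1 :=
        (circleAverage_fun_sum fun k _ => hint (by fun_prop)).symm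
    _ ≤ B := circleAverage_mono_on_of_le_circle (hint (by fun_prop))
        fun z hz => h z (by simpa using hz)

theorem sum_sqrt_sum_prod_mul_norm_coeff_sq_le_fin (hφ : ∀ j, Continuous (φ j))
    (hv₀ : ∀ j, 0 ≤ v j)
    (hv : ∀ a : J → ℂ, ∑ j, v j * ‖a j‖ ^ 2 ≤
      circleAverage (fun z => ‖∑ j, a j * φ j z‖) 0 1 ^ 2)
    {N : ℕ} {c : K → (Fin N → J) → ℂ} {B : ℝ}
    (h : ∀ z : Fin N → ℂ, (∀ r, ‖z r‖ = 1) →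
      ∑ k, ‖∑ α : Fin N → J, c k α * ∏ r, φ (α r) (z r)‖ ≤ B) :
    ∑ k, √(∑ α : Fin N → J, (∏ r, v (α r)) * ‖c k α‖ ^ 2) ≤ B := by
  induction N with
  | zero => simpa [sqrt_sq] using h isEmptyElim isEmptyElim
  | succ N ih =>
    have split {M : Type} [AddCommMonoid M] (g : (Fin (N + 1) → J) → M) :
        ∑ α, g α = ∑ α : Fin N → J, ∑ j, g (Fin.cons j α) := by
      rw [← (Fin.consEquiv fun _ => J).sum_comp, Fintype.sum_prod_type_right]
      rfl
    have := sum_sqrt_mul_sum_norm_coeff_sq_le (B := B) hφ hv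
      (w := fun α : Fin N → J => ∏ r, v (α r)) (fun α => prod_nonneg fun r _ => hv₀ (α r))
      (a := fun k α j => c k (Fin.cons j α)) fun z hz => ih fun z' hz' => ?_
    · simpa only [split, Fin.prod_univ_succ, Fin.cons_zero, Fin.cons_succ, mul_sum, mul_assoc,
        mul_left_comm (v _)] using this
    · have := h (Fin.cons z z') (Fin.cases hz hz')
      simpa only [split, Fin.prod_univ_succ, Fin.cons_zero, Fin.cons_succ, sum_mul,
        mul_assoc] using this

theorem sum_sqrt_sum_prod_mul_norm_coeff_sq_le {ι : Type*} [Fintype ι] [DecidableEq ι]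
    (hφ : ∀ j, Continuous (φ j)) (hv₀ : ∀ j, 0 ≤ v j)
    (hv : ∀ a : J → ℂ, ∑ j, v j * ‖a j‖ ^ 2 ≤
      circleAverage (fun z => ‖∑ j, a j * φ j z‖) 0 1 ^ 2)
    {c : K → (ι → J) → ℂ} {B : ℝ}
    (h : ∀ z : ι → ℂ, (∀ r, ‖z r‖ = 1) →
      ∑ k, ‖∑ α : ι → J, c k α * ∏ r, φ (α r) (z r)‖ ≤ B) :
    ∑ k, √(∑ α : ι → J, (∏ r, v (α r)) * ‖c k α‖ ^ 2) ≤ B := by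
  let e := Fintype.equivFin ι
  have reindex {M : Type} [AddCommMonoid M] (g : (ι → J) → M) :
      ∑ α, g α = ∑ α : Fin _ → J, g (α ∘ e) := ((e.arrowCongr (.refl J)).symm.sum_comp g).symm
  have prod_reindex {M : Type} [CommMonoid M] (g : ι → M) : ∏ r, g r = ∏ s, g (e.symm s) :=
    (e.symm.prod_comp g).symm
  have := sum_sqrt_sum_prod_mul_norm_coeff_sq_le_fin (B := B) hφ hv₀ hv
    (c := fun k α => c k (α ∘ e)) fun z hz => ?_
  · simpa only [reindex, prod_reindex, Function.comp_apply, e.apply_symm_apply] using this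
  · simpa only [reindex, prod_reindex, Function.comp_apply, e.apply_symm_apply] using
      h (z ∘ e) fun r => hz (e r)

theorem sum_sqrt_sum_norm_monomial_coeff_sq_le {ι : Type*} [Fintype ι] {d : ℕ} (hd : d ≠ 0)
    {Λ : Finset (ι →₀ ℕ)} (hΛ : ∀ β ∈ Λ, ∀ r, β r ≤ d) {c : K → (ι →₀ ℕ) → ℂ} {B : ℝ}
    (h : ∀ z : ι → ℂ, (∀ r, ‖z r‖ = 1) → ∑ k, ‖∑ β ∈ Λ, c k β * ∏ r, z r ^ β r‖ ≤ B) :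
    ∑ k, √(∑ β ∈ Λ, ‖c k β‖ ^ 2 / (2 * d) ^ #β.support) ≤ B := by
  classical
  let E (α : ι → Fin (d + 1)) : ι →₀ ℕ := Finsupp.equivFunOnFinite.symm fun r => α r
  have E_apply (α r) : E α r = α r := rfl
  have hE : Function.Injective E := fun α α' hα => funext fun r => Fin.ext (DFunLike.congr_fun hα r)
  have range_E : ∀ β ∈ Λ, β ∈ Set.range E := fun β hβ =>
    ⟨fun r => ⟨β r, Nat.lt_succ_of_le (hΛ β hβ r)⟩, by ext; rfl⟩
  have reindex {M : Type} [AddCommMonoid M] (g : (ι →₀ ℕ) → M) :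
      ∑ β ∈ Λ, g β = ∑ α, if E α ∈ Λ then g (E α) else 0 := by
    rw [← sum_preimage E Λ hE.injOn g fun β hβ hβ' => absurd (range_E β hβ) hβ', ← sum_filter]
    congr 1
    ext
    simp
  have weight (α : ι → Fin (d + 1)) :
      ∏ r, (if α r = 0 then 1 else (2 * d : ℝ)⁻¹) = ((2 * d : ℝ) ^ #(E α).support)⁻¹ := by
    have : #{r | α r ≠ 0} = #(E α).support := congrArg card <| by
      ext r
      simp [E_apply, ← Fin.val_eq_zero_iff]
    simp only [prod_ite, prod_const_one, one_mul, prod_const, inv_pow, this]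
  have := sum_sqrt_sum_prod_mul_norm_coeff_sq_le (B := B)
    (c := fun k α => if E α ∈ Λ then c k (E α) else 0)
    (fun j => continuous_pow _) (fun j => by positivity)
    (sum_norm_coeff_sq_le_circleAverage_sq hd) fun z hz => ?_
  · simpa only [reindex, weight, apply_ite (‖·‖ ^ 2), norm_zero, zero_pow two_ne_zero, mul_ite,
      mul_zero, div_eq_inv_mul] using this
  · simp only [reindex] at h
    simpa only [ite_mul, zero_mul, E_apply] using h z hz

end Torus

section Blei

open Real

variable {κ : Type*} [Fintype κ]

theorem prod_div_rpow_le_inv_mul {b : ℝ} (hb : 0 ≤ b) {g S : κ → ℝ} (hg : ∀ l, 0 < g l)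
    (hS : ∀ l, 0 ≤ S l) :
    ∏ l, (b / S l) ^ (2 / (Fintype.card κ + 1 : ℝ)) ≤
      (Fintype.card κ + 1 : ℝ)⁻¹ * (∏ l, g l / S l + ∑ l, b ^ 2 / (g l * S l)) := by
  let y (o : Option κ) : ℝ := o.elim (∏ l, g l / S l) fun l => b ^ 2 / (g l * S l)
  have hy (o : Option κ) : 0 ≤ y o := by
    rcases o with _ | l
    · exact prod_nonneg fun l _ => div_nonneg (hg l).le (hS l)
    · exact div_nonneg (sq_nonneg b) (mul_nonneg (hg l).le (hS l))
  have prod_y : ∏ o, y o = ∏ l, (b / S l) ^ 2 := by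
    simp only [Fintype.prod_option, y, Option.elim, ← prod_mul_distrib]
    refine prod_congr rfl fun l _ => ?_
    rcases (hS l).eq_or_lt with h | h
    · simp [← h]
    · have := (hg l).ne'
      field_simp
  calc ∏ l, (b / S l) ^ (2 / (Fintype.card κ + 1 : ℝ))
      = (∏ o, y o) ^ (Fintype.card κ + 1 : ℝ)⁻¹ := by
        rw [prod_y, ← finsetProd_rpow _ _ fun l _ => sq_nonneg _]
        refine prod_congr rfl fun l _ => ?_
        rw [← rpow_two, ← rpow_mul (div_nonneg hb (hS l)), div_eq_mul_inv 2 (_ : ℝ)]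
    _ = ∏ o, y o ^ (Fintype.card κ + 1 : ℝ)⁻¹ := (finsetProd_rpow _ _ (fun o _ => hy o) _).symm
    _ ≤ ∑ o, (Fintype.card κ + 1 : ℝ)⁻¹ * y o :=
        geom_mean_le_arith_mean_weighted _ _ _ (fun _ _ => by positivity)
          (by simp; field_simp) fun o _ => hy o
    _ = _ := by simp only [← mul_sum, Fintype.sum_option, y, Option.elim]

theorem rpow_le_prod_rpow_mul [Nonempty κ] {b : ℝ} (hb : 0 ≤ b) {g S : κ → ℝ}
    (hg : ∀ l, b ≤ g l) (hS : ∀ l, g l ≤ S l) :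
    b ^ (2 * Fintype.card κ / (Fintype.card κ + 1) : ℝ) ≤
      (∏ l, S l ^ (2 / (Fintype.card κ + 1 : ℝ))) *
        ((Fintype.card κ + 1 : ℝ)⁻¹ * (∏ l, g l / S l + ∑ l, b ^ 2 / (g l * S l))) := by
  have hg₀ (l : κ) : 0 ≤ g l := hb.trans (hg l)
  have hS₀ (l : κ) : 0 ≤ S l := (hg₀ l).trans (hS l)
  rcases hb.eq_or_lt with rfl | h
  · rw [zero_rpow (by positivity)]
    exact mul_nonneg (prod_nonneg fun l _ => rpow_nonneg (hS₀ l) _) <|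
      mul_nonneg (by positivity) <|
      add_nonneg (prod_nonneg fun l _ => div_nonneg (hg₀ l) (hS₀ l)) (by simp)
  · have hS_pos : 0 < ∏ l, S l ^ (2 / (Fintype.card κ + 1 : ℝ)) :=
      prod_pos fun l _ => rpow_pos_of_pos (h.trans_le ((hg l).trans (hS l))) _
    rw [← div_le_iff₀' hS_pos]
    refine le_trans (le_of_eq ?_) (prod_div_rpow_le_inv_mul hb (fun l => h.trans_le (hg l)) hS₀)
    simp only [div_rpow hb (hS₀ _), prod_div_distrib, prod_const, card_univ,
      ← rpow_mul_natCast hb]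
    ring_nf

theorem sum_sq_div_sqrt_mul_sum_sqrt_le_one {I T : Type*} [Fintype I] [Fintype T]
    [DecidableEq T] (p : I → T) (b : I → ℝ) :
    ∑ i, b i ^ 2 / (√(∑ i' with p i' = p i, b i' ^ 2) *
      ∑ k, √(∑ i' with p i' = k, b i' ^ 2)) ≤ 1 := by
  set g : T → ℝ := fun k => √(∑ i with p i = k, b i ^ 2)
  have g_sq (k : T) : ∑ i with p i = k, b i ^ 2 = g k * g k :=
    (mul_self_sqrt (sum_nonneg fun i _ => sq_nonneg (b i))).symm
  calc ∑ i, b i ^ 2 / (g (p i) * ∑ k, g k)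
      = ∑ k, ∑ i with p i = k, b i ^ 2 / (g k * ∑ k, g k) := by
        rw [← sum_fiberwise univ p]
        exact sum_congr rfl fun k _ => sum_congr rfl fun i hi => by rw [(mem_filter.1 hi).2]
    _ = (∑ k, g k) / ∑ k, g k := by
        rw [sum_div]
        exact sum_congr rfl fun k _ => by rw [← sum_div, g_sq, ← div_div, mul_self_div_self]
    _ ≤ 1 := div_self_le_one _

theorem sum_rpow_le_prod_sum_sqrt_rpow [Nonempty κ] [DecidableEq κ] {ι : κ → Type*}
    [∀ l, Fintype (ι l)] [∀ l, DecidableEq (ι l)] {b : (∀ l, ι l) → ℝ} (hb : ∀ i, 0 ≤ b i) :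
    ∑ i, b i ^ (2 * Fintype.card κ / (Fintype.card κ + 1) : ℝ) ≤
      ∏ l, (∑ k, √(∑ i with i l = k, b i ^ 2)) ^ (2 / (Fintype.card κ + 1 : ℝ)) := by
  let g (l : κ) (k : ι l) : ℝ := √(∑ i with i l = k, b i ^ 2)
  let S (l : κ) : ℝ := ∑ k, g l k
  have hS (l : κ) : 0 ≤ S l := sum_nonneg fun k _ => sqrt_nonneg _
  have b_le_g (i : ∀ l, ι l) (l : κ) : b i ≤ g l (i l) :=
    le_sqrt_of_sq_le <| single_le_sum (f := fun i => b i ^ 2) (fun i _ => sq_nonneg _) (by simp)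
  have g_le_S (l : κ) (k : ι l) : g l k ≤ S l :=
    single_le_sum (f := g l) (fun k _ => sqrt_nonneg _) (mem_univ k)
  have sum_prod : ∑ i : ∀ l, ι l, ∏ l, g l (i l) / S l ≤ 1 := by
    rw [← Fintype.prod_sum fun l k => g l k / S l]
    refine prod_le_one (fun l _ => sum_nonneg fun k _ => div_nonneg (sqrt_nonneg _) (hS l))
      fun l _ => ?_
    rw [← sum_div]
    exact div_self_le_one _
  calc ∑ i, b i ^ (2 * Fintype.card κ / (Fintype.card κ + 1) : ℝ)
      ≤ ∑ i, (∏ l, S l ^ (2 / (Fintype.card κ + 1 : ℝ))) * ((Fintype.card κ + 1 : ℝ)⁻¹ *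
          (∏ l, g l (i l) / S l + ∑ l, b i ^ 2 / (g l (i l) * S l))) :=
        sum_le_sum fun i _ => rpow_le_prod_rpow_mul (hb i) (b_le_g i) fun l => g_le_S l (i l)
    _ = (∏ l, S l ^ (2 / (Fintype.card κ + 1 : ℝ))) * ((Fintype.card κ + 1 : ℝ)⁻¹ *
          (∑ i : ∀ l, ι l, ∏ l, g l (i l) / S l +
            ∑ l, ∑ i : ∀ l, ι l, b i ^ 2 / (g l (i l) * S l))) := by
        rw [← mul_sum, ← mul_sum, sum_add_distrib, sum_comm (t := univ (α := κ))]
    _ ≤ (∏ l, S l ^ (2 / (Fintype.card κ + 1 : ℝ))) * ((Fintype.card κ + 1 : ℝ)⁻¹ *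
          (1 + ∑ _l : κ, 1)) := by
        gcongr with l
        exact sum_sq_div_sqrt_mul_sum_sqrt_le_one (fun i : ∀ l, ι l => i l) b
    _ = ∏ l, S l ^ (2 / (Fintype.card κ + 1 : ℝ)) := by
        rw [sum_const, card_univ, nsmul_one, add_comm, inv_mul_cancel₀ (by positivity), mul_one]

end Blei

section MultiIndex

open Nat

variable {ι : Type*} {m : ℕ}

/-- The multi-index of a tuple of variables: `multiIndex i r` is the number of occurrences of `r`
in `i`, so that the monomial `∏ l, z (i l)` is `z ^ multiIndex i`. -/
noncomputable def multiIndex (i : Fin m → ι) : ι →₀ ℕ :=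
  ∑ l, Finsupp.single (i l) 1

theorem multiIndex_apply [DecidableEq ι] (i : Fin m → ι) (r : ι) :
    multiIndex i r = #{l | i l = r} := by
  simp [multiIndex, Finsupp.single_apply]

theorem multiIndex_insertNth (l : Fin (m + 1)) (k : ι) (j : Fin m → ι) :
    multiIndex (l.insertNth k j : Fin (m + 1) → ι) = Finsupp.single k 1 + multiIndex j := by
  simp [multiIndex, Fin.sum_univ_succAbove _ l]

theorem multiIndex_cons (k : ι) (j : Fin m → ι) :
    multiIndex (Fin.cons k j : Fin (m + 1) → ι) = Finsupp.single k 1 + multiIndex j := by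
  simp [multiIndex, Fin.sum_univ_succ]

theorem prod_comp_eq_prod_pow_multiIndex [Fintype ι] {R : Type*} [CommMonoid R] (z : ι → R)
    (i : Fin m → ι) : ∏ l, z (i l) = ∏ r, z r ^ multiIndex i r := by
  classical
  rw [← prod_fiberwise' univ i z]
  simp only [prod_const, multiIndex_apply]

theorem multinomial_single_add_le (k : ι) (β : ι →₀ ℕ) :
    (Finsupp.single k 1 + β).multinomial ≤ (β.degree + 1) * β.multinomial := by
  set α := Finsupp.single k 1 + β with hα
  have spec (γ : ι →₀ ℕ) (hγ : γ.support ⊆ α.support) :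
      (∏ r ∈ α.support, (γ r)!) * γ.multinomial = γ.degree ! := by
    rw [← Finsupp.multinomial_of_support_subset hγ, multinomial_spec,
      Finsupp.degree_apply, sum_subset hγ fun r _ => Finsupp.notMem_support_iff.1]
  have prod_factorial_le : ∏ r ∈ α.support, (β r)! ≤ ∏ r ∈ α.support, (α r)! :=
    prod_le_prod' fun r _ => factorial_le (by simp [hα])
  refine le_of_mul_le_mul_left ?_
    (prod_pos fun r _ => factorial_pos (β r) : 0 < ∏ r ∈ α.support, (β r)!)
  calc (∏ r ∈ α.support, (β r)!) * α.multinomial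
      ≤ (∏ r ∈ α.support, (α r)!) * α.multinomial := by gcongr
    _ = (β.degree + 1) * ((∏ r ∈ α.support, (β r)!) * β.multinomial) := by
        rw [spec α Subset.rfl, spec β (Finsupp.support_mono le_add_self), hα, map_add,
          Finsupp.degree_single, add_comm, factorial_succ]
    _ = (∏ r ∈ α.support, (β r)!) * ((β.degree + 1) * β.multinomial) := by ring

theorem degree_multiIndex (i : Fin m → ι) : (multiIndex i).degree = m := by
  simp [multiIndex]

theorem embDomain_multiIndex {κ : Type*} (f : κ ↪ ι) (i : Fin m → κ) :
    (multiIndex i).embDomain f = multiIndex (f ∘ i) := by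
  simp [multiIndex, Finsupp.embDomain_eq_mapDomain, Finsupp.mapDomain_finsetSum]

theorem multinomial_embDomain {κ : Type*} (f : κ ↪ ι) (α : κ →₀ ℕ) :
    (α.embDomain f).multinomial = α.multinomial := by
  simp [Finsupp.multinomial_eq, Nat.multinomial]

theorem factorial_div_prod_factorial_eq_multinomial {K : Type*} [Field K] [CharZero K] {α : ι →₀ ℕ}
    (hα : α.degree = m) : (m ! : K) / α.prod (fun _ k => (k ! : K)) = α.multinomial := by
  have prod_ne_zero : α.prod (fun _ k => (k ! : K)) ≠ 0 :=
    prod_ne_zero_iff.2 fun r _ => Nat.cast_ne_zero.2 (factorial_ne_zero (α r))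
  rw [div_eq_iff prod_ne_zero, mul_comm, ← hα]
  exact_mod_cast (multinomial_spec α.support α).symm

variable [Fintype ι] [DecidableEq ι]

theorem sum_multiIndex {G : Type*} [AddCommMonoid G] (f : (ι →₀ ℕ) → G) :
    ∑ i : Fin m → ι, f (multiIndex i) =
      ∑ α ∈ finsuppAntidiag univ m, α.multinomial • f α := by
  let Φ : MvPolynomial ι ℕ →ₗ[ℕ] G := (MvPolynomial.basisMonomials ι ℕ).constr ℕ f
  have Φ_monomial (α : ι →₀ ℕ) : Φ (MvPolynomial.monomial α 1) = f α := by
    simpa using (MvPolynomial.basisMonomials ι ℕ).constr_basis ℕ f α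
  have tuples : (∑ r : ι, MvPolynomial.X r : MvPolynomial ι ℕ) ^ m =
      ∑ i : Fin m → ι, MvPolynomial.monomial (multiIndex i) 1 := by
    simp only [Fintype.sum_pow, multiIndex, MvPolynomial.monomial_sum_one]
    rfl
  have multinomials : (∑ r : ι, MvPolynomial.X r : MvPolynomial ι ℕ) ^ m =
      ∑ α ∈ finsuppAntidiag univ m, α.multinomial • MvPolynomial.monomial α 1 := by
    rw [sum_pow_eq_sum_piAntidiag]
    refine sum_nbij' Finsupp.equivFunOnFinite.symm (fun α => α) ?_ ?_ ?_ ?_ ?_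
    · simp
    · simp
    · simp
    · simp
    · intro k _
      rw [← Finsupp.multinomial_of_support_subset (subset_univ _), nsmul_eq_mul,
        MvPolynomial.monomial_eq, Finsupp.prod_fintype _ _ fun r => pow_zero _]
      simp
  calc ∑ i : Fin m → ι, f (multiIndex i)
      = Φ ((∑ r : ι, MvPolynomial.X r) ^ m) := by simp only [tuples, map_sum, Φ_monomial]
    _ = _ := by simp only [multinomials, map_sum, map_nsmul, Φ_monomial]

theorem sum_filter_apply_eq_multiIndex {G : Type*} [AddCommMonoid G] (f : (ι →₀ ℕ) → G)
    (l : Fin (m + 1)) (k : ι) :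
    ∑ i : Fin (m + 1) → ι with i l = k, f (multiIndex i) =
      ∑ j : Fin m → ι, f (Finsupp.single k 1 + multiIndex j) := by
  rw [sum_filter, ← (Fin.insertNthEquiv (fun _ => ι) l).sum_comp, Fintype.sum_prod_type]
  simp only [Fin.insertNthEquiv_apply, Fin.insertNth_apply_same, sum_ite_irrel, sum_const_zero,
    sum_ite_eq', mem_univ, if_true]
  exact sum_congr rfl fun j _ => congrArg f (multiIndex_insertNth l k j)

theorem sum_multinomial_mul_rpow_le {f : (ι →₀ ℕ) → ℝ} (hf : ∀ α, 0 ≤ f α) :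
    ∑ α ∈ finsuppAntidiag univ (m + 1),
        α.multinomial * f α ^ (2 * (m + 1) / (m + 2) : ℝ) ≤
      (∑ k, √(∑ β ∈ finsuppAntidiag univ m,
        β.multinomial * f (Finsupp.single k 1 + β) ^ 2)) ^ (2 * (m + 1) / (m + 2) : ℝ) := by
  have blei := sum_rpow_le_prod_sum_sqrt_rpow (κ := Fin (m + 1)) (ι := fun _ => ι)
    fun i => hf (multiIndex i)
  have section_eq (l : Fin (m + 1)) (k : ι) :
      ∑ i : Fin (m + 1) → ι with i l = k, f (multiIndex i) ^ 2 =
        ∑ β ∈ finsuppAntidiag univ m, β.multinomial * f (Finsupp.single k 1 + β) ^ 2 := by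
    simp only [sum_filter_apply_eq_multiIndex (fun α => f α ^ 2),
      sum_multiIndex fun β => f (Finsupp.single k 1 + β) ^ 2, nsmul_eq_mul]
  have exponent : (m + 1 : ℝ) + 1 = m + 2 := by ring
  simp only [section_eq, prod_const, Finset.card_univ, Fintype.card_fin, cast_add_one, exponent,
    sum_multiIndex fun α => f α ^ (2 * (m + 1) / (m + 2) : ℝ), nsmul_eq_mul] at blei
  refine blei.trans_eq ?_
  rw [← Real.rpow_mul_natCast (sum_nonneg fun _ _ => Real.sqrt_nonneg _), cast_add_one,
    div_mul_eq_mul_div]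

end MultiIndex

section Polarization

variable {ι E F : Type*} [Fintype ι] [NormedAddCommGroup E] [NormedAddCommGroup F]

theorem norm_map_const_le_pow_mul [NormedSpace ℂ E] [NormedSpace ℂ F]
    {L : ContinuousMultilinearMap ℂ (fun _ : ι => E) F} {C : ℝ}
    (hC : ∀ z, ‖z‖ ≤ 1 → ‖L fun _ => z‖ ≤ C) {r : ℝ} (hr : 0 < r) {y : E} (hy : ‖y‖ ≤ r) :
    ‖L fun _ => y‖ ≤ r ^ Fintype.card ι * C := by
  have norm_r : ‖(r : ℂ)‖ = r := Complex.norm_of_nonneg hr.le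
  have r_ne_zero : (r : ℂ) ≠ 0 := Complex.ofReal_ne_zero.2 hr.ne'
  have norm_rescaled : ‖(r : ℂ)⁻¹ • y‖ ≤ 1 := by
    rwa [norm_smul, norm_inv, norm_r, inv_mul_le_one₀ hr]
  calc ‖L fun _ => y‖ = ‖L fun _ => (r : ℂ) • (r : ℂ)⁻¹ • y‖ := by rw [smul_inv_smul₀ r_ne_zero]
    _ = r ^ Fintype.card ι * ‖L fun _ => (r : ℂ)⁻¹ • y‖ := by
        rw [L.map_smul_univ (fun _ => (r : ℂ)) fun _ => (r : ℂ)⁻¹ • y, prod_const, card_univ,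
          norm_smul, norm_pow, norm_r]
    _ ≤ r ^ Fintype.card ι * C := by gcongr; exact hC _ norm_rescaled

theorem hasDerivAt_map_const_add_smul {𝕜 : Type*} [NontriviallyNormedField 𝕜] [NormedSpace 𝕜 E]
    [NormedSpace 𝕜 F] [DecidableEq ι] {L : ContinuousMultilinearMap 𝕜 (fun _ : ι => E) F}
    (hL : ∀ (σ : Equiv.Perm ι) (z : ι → E), L (z ∘ σ) = L z) (i : ι) (z w : E) (t : 𝕜) :
    HasDerivAt (fun t : 𝕜 => L fun _ => z + t • w)
      (Fintype.card ι • L (Function.update (fun _ => z + t • w) i w)) t := by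
  have update_eq (l : ι) : L (Function.update (fun _ => z + t • w) l w) =
      L (Function.update (fun _ => z + t • w) i w) := by
    rw [← hL (Equiv.swap i l), Function.update_comp_equiv, Equiv.symm_swap, Equiv.swap_apply_right]
    rfl
  have line : HasDerivAt (fun (t : 𝕜) (_ : ι) => z + t • w) (fun _ => w) t :=
    hasDerivAt_pi.2 fun _ => by simpa using ((hasDerivAt_id t).smul_const w).const_add z
  convert! (L.hasFDerivAt _).comp_hasDerivAt t line using 1
  rw [L.linearDeriv_apply, sum_congr rfl fun l _ => update_eq l, sum_const, card_univ]

theorem norm_map_update_const_le [NormedSpace ℂ E] [NormedSpace ℂ F] {n : ℕ} (hn : n ≠ 0)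
    {L : ContinuousMultilinearMap ℂ (fun _ : Fin (n + 1) => E) F}
    (hL : ∀ (σ : Equiv.Perm (Fin (n + 1))) (z : Fin (n + 1) → E), L (z ∘ σ) = L z)
    {C : ℝ} (hC : ∀ z, ‖z‖ ≤ 1 → ‖L fun _ => z‖ ≤ C) (i : Fin (n + 1)) {z w : E}
    (hz : ‖z‖ ≤ 1) (hw : ‖w‖ ≤ 1) :
    ‖L (Function.update (fun _ => z) i w)‖ ≤ (1 + (n : ℝ)⁻¹) ^ n * C := by
  have n_pos : (0 : ℝ) < n := by positivity
  have deriv_line (t : ℂ) := hasDerivAt_map_const_add_smul hL i z w t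
  have differentiable_line : Differentiable ℂ fun t : ℂ => L fun _ => z + t • w :=
    fun t => (deriv_line t).differentiableAt
  have bound_on_circle (t : ℂ) (ht : t ∈ Metric.sphere (0 : ℂ) (n : ℝ)⁻¹) :
      ‖L fun _ => z + t • w‖ ≤ (1 + (n : ℝ)⁻¹) ^ (n + 1) * C := by
    have norm_line : ‖z + t • w‖ ≤ 1 + (n : ℝ)⁻¹ :=
      calc ‖z + t • w‖ ≤ ‖z‖ + ‖t‖ * ‖w‖ := by rw [← norm_smul]; exact norm_add_le _ _
        _ ≤ 1 + (n : ℝ)⁻¹ * 1 := by rw [mem_sphere_zero_iff_norm.1 ht]; gcongr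
        _ = 1 + (n : ℝ)⁻¹ := by rw [mul_one]
    simpa using norm_map_const_le_pow_mul hC (by positivity) norm_line
  have cauchy := Complex.norm_deriv_le_of_forall_mem_sphere_norm_le (inv_pos.2 n_pos)
    differentiable_line.diffContOnCl bound_on_circle
  rw [(deriv_line 0).deriv, ← Nat.cast_smul_eq_nsmul ℂ, norm_smul, Complex.norm_natCast,
    zero_smul, add_zero, Fintype.card_fin, Nat.cast_add_one] at cauchy
  refine le_of_mul_le_mul_left (cauchy.trans_eq ?_) (by positivity : (0 : ℝ) < n + 1)
  rw [pow_succ]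
  field_simp

theorem sum_norm_le_of_forall_norm_sum_mul_le {w : ι → ℂ} {D : ℝ}
    (h : ∀ u : ι → ℂ, (∀ k, ‖u k‖ = 1) → ‖∑ k, u k * w k‖ ≤ D) : ∑ k, ‖w k‖ ≤ D := by
  choose u norm_u u_mul using fun k => Complex.exists_norm_eq_mul_self (w k)
  have := h u norm_u
  rwa [← sum_congr rfl fun k _ => u_mul k, ← Complex.ofReal_sum,
    Complex.norm_of_nonneg (sum_nonneg fun k _ => norm_nonneg _)] at this

theorem sum_norm_map_update_const_le {κ : Type*} [Fintype κ] [NormedSpace ℂ E] {n : ℕ} (hn : n ≠ 0)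
    {L : ContinuousMultilinearMap ℂ (fun _ : Fin (n + 1) => E) ℂ}
    (hL : ∀ (σ : Equiv.Perm (Fin (n + 1))) (z : Fin (n + 1) → E), L (z ∘ σ) = L z)
    {C : ℝ} (hC : ∀ z, ‖z‖ ≤ 1 → ‖L fun _ => z‖ ≤ C) {x : κ → E}
    (hx : ∀ u : κ → ℂ, (∀ k, ‖u k‖ = 1) → ‖∑ k, u k • x k‖ ≤ 1) (i : Fin (n + 1)) {z : E}
    (hz : ‖z‖ ≤ 1) :
    ∑ k, ‖L (Function.update (fun _ => z) i (x k))‖ ≤ Real.exp 1 * C := by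
  have C_nonneg : 0 ≤ C := (norm_nonneg _).trans (hC 0 (by simp))
  refine sum_norm_le_of_forall_norm_sum_mul_le fun u hu => ?_
  have linearity : ∑ k, u k * L (Function.update (fun _ => z) i (x k)) =
      L (Function.update (fun _ => z) i (∑ k, u k • x k)) := by
    simp only [← L.toContinuousLinearMap_apply, map_sum, map_smul, smul_eq_mul]
  rw [linearity]
  exact (norm_map_update_const_le hn hL hC i hz (hx u hu)).trans
    (mul_le_mul_of_nonneg_right Real.one_add_inv_pow_le_exp C_nonneg)

end Polarization

section FewVariables

variable {ι : Type*}

theorem mul_sq_rpow_mul_le {p μ ν N t : ℝ} (hp : 0 < p) (hp₂ : p ≤ 2) (hμ : 1 ≤ μ) (hν : 0 ≤ ν)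
    (hμν : μ ≤ N * ν) : ν * (μ ^ (1 - p⁻¹) * t) ^ 2 ≤ N * (ν * t) ^ 2 := by
  have exponent_le : (1 - p⁻¹) * (2 : ℕ) ≤ 1 := by
    have : 2⁻¹ ≤ p⁻¹ := inv_anti₀ hp hp₂
    push_cast
    linarith
  calc ν * (μ ^ (1 - p⁻¹) * t) ^ 2 = ν * t ^ 2 * (μ ^ (1 - p⁻¹)) ^ 2 := by ring
    _ ≤ ν * t ^ 2 * μ := by
        gcongr
        rw [← Real.rpow_mul_natCast (by positivity)]
        exact Real.rpow_le_self_of_one_le hμ exponent_le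
    _ ≤ ν * t ^ 2 * (N * ν) := by gcongr
    _ = N * (ν * t) ^ 2 := by ring

/-- The coefficients `α.multinomial * a α` involving at most `M` variables, in absolute value and
divided by `α.multinomial ^ p⁻¹`, so that their `p`-th powers weighted by `α.multinomial` add up to
the `p`-th powers of the coefficients. -/
noncomputable def sparseWeight (p : ℝ) (M : ℕ) (a : (ι →₀ ℕ) → ℂ) (α : ι →₀ ℕ) : ℝ :=
  if #α.support ≤ M then α.multinomial ^ (1 - p⁻¹) * ‖a α‖ else 0

theorem sparseWeight_nonneg (p : ℝ) (M : ℕ) (a : (ι →₀ ℕ) → ℂ) (α : ι →₀ ℕ) :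
    0 ≤ sparseWeight p M a α := by
  unfold sparseWeight
  positivity

theorem multinomial_mul_sparseWeight_rpow {p : ℝ} (hp : p ≠ 0) (M : ℕ) (a : (ι →₀ ℕ) → ℂ)
    (α : ι →₀ ℕ) : α.multinomial * sparseWeight p M a α ^ p =
      if #α.support ≤ M then ‖α.multinomial * a α‖ ^ p else 0 := by
  unfold sparseWeight
  split_ifs
  · have multinomial_pos : (0 : ℝ) < α.multinomial := mod_cast Nat.multinomial_pos ..
    rw [norm_mul, Complex.norm_natCast, Real.mul_rpow (by positivity) (norm_nonneg _),
      Real.mul_rpow multinomial_pos.le (norm_nonneg _), ← Real.rpow_mul multinomial_pos.le,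
      sub_mul, one_mul, inv_mul_cancel₀ hp, ← mul_assoc, Real.rpow_sub_one multinomial_pos.ne',
      mul_div_cancel₀ _ multinomial_pos.ne']
  · rw [Real.zero_rpow hp, mul_zero]

theorem multinomial_mul_sparseWeight_sq_le {p : ℝ} (hp : 0 < p) (hp₂ : p ≤ 2) {q : ℝ}
    (hq : 1 ≤ q) (M : ℕ) (a : (ι →₀ ℕ) → ℂ) (k : ι) (β : ι →₀ ℕ) :
    β.multinomial * sparseWeight p M a (Finsupp.single k 1 + β) ^ 2 ≤
      (β.degree + 1) * q ^ M *
        (‖β.multinomial * a (Finsupp.single k 1 + β)‖ ^ 2 / q ^ #β.support) := by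
  unfold sparseWeight
  split_ifs with few_variables
  · have pow_le : q ^ #β.support ≤ q ^ M :=
      pow_le_pow_right₀ hq ((card_le_card (Finsupp.support_mono le_add_self)).trans few_variables)
    calc _ ≤ (β.degree + 1) * (β.multinomial * ‖a (Finsupp.single k 1 + β)‖) ^ 2 :=
          mul_sq_rpow_mul_le hp hp₂ (mod_cast Nat.multinomial_pos ..) (Nat.cast_nonneg _)
            (mod_cast multinomial_single_add_le k β)
      _ = (β.degree + 1) * q ^ #β.support *
          (‖β.multinomial * a (Finsupp.single k 1 + β)‖ ^ 2 / q ^ #β.support) := by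
        rw [norm_mul, Complex.norm_natCast]
        field_simp
      _ ≤ _ := by gcongr
  · rw [zero_pow two_ne_zero, mul_zero]
    positivity

variable [Fintype ι] [DecidableEq ι]

theorem sum_norm_multinomial_mul_rpow_le {n : ℕ} (hn : n ≠ 0) (M : ℕ) {a : (ι →₀ ℕ) → ℂ} {D : ℝ}
    (h : ∀ z : ι → ℂ, (∀ r, ‖z r‖ = 1) →
      ∑ k, ‖∑ β ∈ finsuppAntidiag univ n,
        β.multinomial * a (Finsupp.single k 1 + β) * ∏ r, z r ^ β r‖ ≤ D) :
    ∑ α ∈ finsuppAntidiag univ (n + 1) with #α.support ≤ M,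
        ‖α.multinomial * a α‖ ^ (2 * (n + 1) / (n + 2) : ℝ) ≤
      (√((n + 1) * (2 * n) ^ M) * D) ^ (2 * (n + 1) / (n + 2) : ℝ) := by
  have one_le_n : (1 : ℝ) ≤ n := mod_cast Nat.one_le_iff_ne_zero.2 hn
  set p : ℝ := 2 * (n + 1) / (n + 2) with hp
  have p_pos : 0 < p := by positivity
  have p_le_two : p ≤ 2 := by rw [hp, div_le_iff₀ (by positivity)]; linarith
  have degree_eq (β) (hβ : β ∈ finsuppAntidiag (univ : Finset ι) n) : β.degree = n := by
    rw [Finsupp.degree_eq_sum, (mem_finsuppAntidiag.1 hβ).1]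
  calc ∑ α ∈ finsuppAntidiag univ (n + 1) with #α.support ≤ M, ‖α.multinomial * a α‖ ^ p
      = ∑ α ∈ finsuppAntidiag univ (n + 1), α.multinomial * sparseWeight p M a α ^ p := by
        simp only [sum_filter, multinomial_mul_sparseWeight_rpow p_pos.ne']
    _ ≤ (∑ k, √(∑ β ∈ finsuppAntidiag univ n,
          β.multinomial * sparseWeight p M a (Finsupp.single k 1 + β) ^ 2)) ^ p :=
        sum_multinomial_mul_rpow_le (sparseWeight_nonneg p M a)
    _ ≤ (√((n + 1) * (2 * n) ^ M) * ∑ k, √(∑ β ∈ finsuppAntidiag univ n,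
          ‖β.multinomial * a (Finsupp.single k 1 + β)‖ ^ 2 / (2 * n) ^ #β.support)) ^ p := by
        gcongr
        simp only [mul_sum, ← Real.sqrt_mul (show (0 : ℝ) ≤ (n + 1) * (2 * n) ^ M by positivity)]
        refine sum_le_sum fun k _ => Real.sqrt_le_sqrt (sum_le_sum fun β hβ => ?_)
        simpa only [degree_eq β hβ] using multinomial_mul_sparseWeight_sq_le p_pos p_le_two
          (by linarith : (1 : ℝ) ≤ 2 * n) M a k β
    _ ≤ (√((n + 1) * (2 * n) ^ M) * D) ^ p := by
        gcongr
        exact sum_sqrt_sum_norm_monomial_coeff_sq_le hn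
          (fun β hβ r => (β.le_degree r).trans_eq (degree_eq β hβ)) h

theorem sum_multinomial_mul_prod_pow_eq_map {E : Type*} [NormedAddCommGroup E] [NormedSpace ℂ E]
    {n : ℕ} {L : ContinuousMultilinearMap ℂ (fun _ : Fin (n + 1) => E) ℂ} {x : ι → E}
    {a : (ι →₀ ℕ) → ℂ} (ha : ∀ i, L (x ∘ i) = a (multiIndex i)) (k : ι) (z : ι → ℂ) :
    ∑ β ∈ finsuppAntidiag univ n,
        β.multinomial * a (Finsupp.single k 1 + β) * ∏ r, z r ^ β r =
      L (Function.update (fun _ => ∑ r, z r • x r) 0 (x k)) := by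
  have update_eq_cons (w y : E) :
      Function.update (fun _ : Fin (n + 1) => w) 0 y = Fin.cons y fun _ => w := by
    ext i; cases i using Fin.cases <;> simp
  have cons_comp (j : Fin n → ι) :
      (Fin.cons (x k) (fun l => x (j l)) : Fin (n + 1) → E) =
        x ∘ (Fin.cons k j : Fin (n + 1) → ι) := by
    ext i; cases i using Fin.cases <;> simp
  have expansion : L (Fin.cons (x k) fun _ => ∑ r, z r • x r) =
      ∑ j : Fin n → ι, (∏ r, z r ^ multiIndex j r) * a (Finsupp.single k 1 + multiIndex j) := by
    rw [← L.curryLeft_apply, ContinuousMultilinearMap.map_sum]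
    refine sum_congr rfl fun j _ => ?_
    rw [ContinuousMultilinearMap.map_smul_univ, L.curryLeft_apply, cons_comp, ha, multiIndex_cons,
      prod_comp_eq_prod_pow_multiIndex, smul_eq_mul]
  rw [update_eq_cons, expansion,
    sum_multiIndex fun β => (∏ r, z r ^ β r) * a (Finsupp.single k 1 + β)]
  refine sum_congr rfl fun β _ => ?_
  rw [nsmul_eq_mul]
  ring

end FewVariables

section FiniteSets

variable {ι E : Type*} [NormedAddCommGroup E] [NormedSpace ℂ E] {n : ℕ}
  {L : ContinuousMultilinearMap ℂ (fun _ : Fin (n + 1) => E) ℂ} {C : ℝ} {x : ι → E}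
  {a : (ι →₀ ℕ) → ℂ}

theorem sum_finsuppAntidiag_norm_coeff_rpow_le [Fintype ι] [DecidableEq ι] (hn : n ≠ 0) (M : ℕ)
    (hL : ∀ (σ : Equiv.Perm (Fin (n + 1))) z, L (z ∘ σ) = L z)
    (hC : ∀ z, ‖z‖ ≤ 1 → ‖L fun _ => z‖ ≤ C)
    (hx : ∀ u : ι → ℂ, (∀ k, ‖u k‖ = 1) → ‖∑ k, u k • x k‖ ≤ 1)
    (ha : ∀ i, L (x ∘ i) = a (multiIndex i)) :
    ∑ α ∈ finsuppAntidiag univ (n + 1) with #α.support ≤ M,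
        ‖α.multinomial * a α‖ ^ (2 * (n + 1) / (n + 2) : ℝ) ≤
      (√((n + 1) * (2 * n) ^ M) * (Real.exp 1 * C)) ^ (2 * (n + 1) / (n + 2) : ℝ) := by
  refine sum_norm_multinomial_mul_rpow_le hn M fun z hz => ?_
  simp only [sum_multinomial_mul_prod_pow_eq_map ha]
  exact sum_norm_map_update_const_le hn hL hC hx 0 (hx z hz)

theorem sum_norm_coeff_rpow_le (hn : n ≠ 0) (M : ℕ)
    (hL : ∀ (σ : Equiv.Perm (Fin (n + 1))) z, L (z ∘ σ) = L z)
    (hC : ∀ z, ‖z‖ ≤ 1 → ‖L fun _ => z‖ ≤ C)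
    (hx : ∀ (S : Finset ι) (u : ι → ℂ), (∀ k ∈ S, ‖u k‖ = 1) → ‖∑ k ∈ S, u k • x k‖ ≤ 1)
    (ha : ∀ i, L (x ∘ i) = a (multiIndex i)) {s : Finset (ι →₀ ℕ)}
    (hs : ∀ α ∈ s, α.degree = n + 1 ∧ #α.support ≤ M) :
    ∑ α ∈ s, ‖α.multinomial * a α‖ ^ (2 * (n + 1) / (n + 2) : ℝ) ≤
      (√((n + 1) * (2 * n) ^ M) * (Real.exp 1 * C)) ^ (2 * (n + 1) / (n + 2) : ℝ) := by
  classical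
  let S : Finset ι := s.biUnion Finsupp.support
  let e : S ↪ ι := .subtype _
  let embed : (S →₀ ℕ) ↪ (ι →₀ ℕ) := ⟨Finsupp.embDomain e, Finsupp.embDomain_injective e⟩
  let T : Finset (S →₀ ℕ) := {β ∈ finsuppAntidiag univ (n + 1) | #β.support ≤ M}
  have s_subset : s ⊆ T.map embed := by
    intro α hα
    obtain ⟨β, rfl⟩ : ∃ β, embed β = α :=
      ⟨_, Finsupp.embDomain_comapDomain (f := e) (by
        simpa [e] using subset_biUnion_of_mem Finsupp.support hα)⟩
    refine mem_map_of_mem _ (mem_filter.2 ⟨mem_finsuppAntidiag.2 ⟨?_, subset_univ _⟩, ?_⟩)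
    · rw [← (hs _ hα).1, ← Finsupp.degree_eq_sum]
      simp [embed, Finsupp.degree_apply]
    · simpa [embed] using (hs _ hα).2
  calc _ ≤ ∑ α ∈ T.map embed, ‖α.multinomial * a α‖ ^ (2 * (n + 1) / (n + 2) : ℝ) :=
        sum_le_sum_of_subset_of_nonneg s_subset fun _ _ _ => by positivity
    _ = ∑ β ∈ T, ‖β.multinomial * a (embed β)‖ ^ (2 * (n + 1) / (n + 2) : ℝ) := by
        simp only [sum_map, embed, Function.Embedding.coeFn_mk, multinomial_embDomain]
    _ ≤ _ := by
        refine sum_finsuppAntidiag_norm_coeff_rpow_le (x := x ∘ e) (a := a ∘ embed) hn M hL hC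
          (fun u hu => ?_) fun i => ?_
        · have sum_eq : ∑ k : S, u k • x k = ∑ k ∈ S, Function.extend e u 1 k • x k := by
            rw [← sum_coe_sort S fun k => Function.extend e u 1 k • x k]
            exact sum_congr rfl fun k _ => congrArg (· • x k) (e.injective.extend_apply u 1 k).symm
          exact (congrArg norm sum_eq).trans_le <| hx S _ fun k hk =>
            (congrArg norm (e.injective.extend_apply u 1 ⟨k, hk⟩)).trans (hu _)
        · exact (ha (e ∘ i)).trans (congrArg a (embDomain_multiIndex e i).symm)

end FiniteSets

theorem norm_map_const_le_iSup {E : Type*} [SeminormedAddCommGroup E] [NormedSpace ℂ E] {m : ℕ}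
    (L : ContinuousMultilinearMap ℂ (fun _ : Fin m => E) ℂ) {z : E} (hz : ‖z‖ ≤ 1) :
    ‖L fun _ => z‖ ≤ ⨆ z ∈ {z : E | ‖z‖ ≤ 1}, ‖L fun _ => z‖ := by
  have bound (w : E) (hw : ‖w‖ ≤ 1) : ‖L fun _ => w‖ ≤ ‖L‖ :=
    (L.le_opNorm _).trans <|
      mul_le_of_le_one_right (norm_nonneg _) (prod_le_one (fun _ _ => norm_nonneg _) fun _ _ => hw)
  have bddAbove : BddAbove (Set.range fun w : E => ⨆ _ : w ∈ {z : E | ‖z‖ ≤ 1}, ‖L fun _ => w‖) :=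
    ⟨‖L‖, Set.forall_mem_range.2 fun w => Real.iSup_le (bound w) (norm_nonneg _)⟩
  exact (ciSup_pos (f := fun _ => ‖L fun _ => z‖) hz).ge.trans (le_ciSup bddAbove z)

theorem norm_sum_smul_c0UnitVector_le (S : Finset ℕ) {u : ℕ → ℂ} (hu : ∀ k ∈ S, ‖u k‖ ≤ 1) :
    ‖∑ k ∈ S, u k • c0UnitVector k‖ ≤ 1 := by
  rw [← ZeroAtInftyContinuousMap.norm_toBCF_eq_norm, BoundedContinuousFunction.norm_le zero_le_one]
  intro r
  have eval : (∑ k ∈ S, u k • c0UnitVector k) r = if r ∈ S then u r else 0 := by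
    have apply (k) : (u k • c0UnitVector k) r = if r = k then u k else 0 := by
      change u k * Pi.single (M := fun _ => ℂ) k 1 r = _
      rw [Pi.single_apply, mul_ite, mul_one, mul_zero]
    let evalHom : ZeroAtInftyContinuousMap ℕ ℂ →+ ℂ := ⟨⟨fun f => f r, rfl⟩, fun _ _ => rfl⟩
    change evalHom (∑ k ∈ S, u k • c0UnitVector k) = _
    rw [map_sum]
    exact (sum_congr rfl fun k _ => apply k).trans (sum_ite_eq S r u)
  change ‖(∑ k ∈ S, u k • c0UnitVector k) r‖ ≤ 1
  rw [eval]
  split_ifs with hr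
  · exact hu r hr
  · simp

theorem sqrt_add_one_mul_two_mul_pow_le {t : ℝ} (ht : 0 ≤ t) (M : ℕ) :
    √((t + 1) * (2 * t) ^ M) ≤ 2 ^ ((M : ℝ) / 2) * (t + 1) ^ (((M : ℝ) + 1) / 2) := by
  calc √((t + 1) * (2 * t) ^ M) ≤ √(2 ^ M * (t + 1) ^ (M + 1)) := by
        refine Real.sqrt_le_sqrt ?_
        calc (t + 1) * (2 * t) ^ M ≤ (t + 1) * (2 * (t + 1)) ^ M := by gcongr; linarith
          _ = 2 ^ M * (t + 1) ^ (M + 1) := by rw [mul_pow]; ring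
    _ = _ := by
        rw [Real.sqrt_mul (by positivity), Real.sqrt_eq_rpow, Real.sqrt_eq_rpow,
          ← Real.rpow_natCast_mul (by positivity), ← Real.rpow_natCast_mul (by positivity)]
        push_cast
        ring_nf

theorem tsum_nnnorm_rpow_rpow_inv_le {κ F : Type*} [SeminormedAddGroup F] {g : κ → F} {p K : ℝ}
    (hp : 0 < p) (hK : 0 ≤ K) (h : ∀ s : Finset κ, ∑ b ∈ s, ‖g b‖ ^ p ≤ K ^ p) :
    (∑' b, (‖g b‖₊ : ENNReal) ^ p) ^ p⁻¹ ≤ ENNReal.ofReal K := by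
  rw [ENNReal.rpow_inv_le_iff hp, ENNReal.ofReal_rpow_of_nonneg hK hp.le,
    ENNReal.tsum_eq_iSup_sum]
  refine iSup_le fun s => ?_
  calc ∑ b ∈ s, (‖g b‖₊ : ENNReal) ^ p = ENNReal.ofReal (∑ b ∈ s, ‖g b‖ ^ p) := by
        rw [ENNReal.ofReal_sum_of_nonneg fun _ _ => by positivity]
        refine sum_congr rfl fun b _ => ?_
        rw [← ENNReal.ofReal_rpow_of_nonneg (norm_nonneg _) hp.le, ofReal_norm]
        rfl
    _ ≤ ENNReal.ofReal (K ^ p) := ENNReal.ofReal_le_ofReal (h s)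

/-- **Bohnenblust–Hille type inequality on `c₀` with polynomial growth in `m`.**
Let `m = n+1 ≥ 2`, `M ≥ 1`, let `L` be a symmetric continuous `m`-linear form on
`c₀`, `P(z) = L(z,…,z)`, and let `cP α = (m!/∏ α_i!) · L(e^α)` be the monomial
coefficients of `P` (encoded by the hypothesis `hcP`, using any tuple `t` whose
multi-index is `α`). Then, with `Λ_M = {α : |α| = m, var(α) ≤ M}`,
`(∑_{α ∈ Λ_M} |c_α(P)|^{2m/(m+1)})^{(m+1)/(2m)} ≤ e · 2^{M/2} m^{(M+1)/2} ‖P‖`. -/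
theorem bohnenblust_hille_c0 (n M : ℕ) (hn : 1 ≤ n) (hM : 1 ≤ M)
    (L : ContinuousMultilinearMap ℂ
      (fun _ : Fin (n + 1) => ZeroAtInftyContinuousMap ℕ ℂ) ℂ)
    (hsym : ∀ (σ : Equiv.Perm (Fin (n + 1)))
      (z : Fin (n + 1) → ZeroAtInftyContinuousMap ℕ ℂ), L (z ∘ σ) = L z)
    (cP : (ℕ →₀ ℕ) → ℂ)
    (hcP : ∀ (α : ℕ →₀ ℕ) (t : Fin (n + 1) → ℕ),
      (∀ r : ℕ, (Finset.univ.filter fun l => t l = r).card = α r) →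
      cP α = (((n + 1).factorial : ℂ) / (α.prod fun _ k => (k.factorial : ℂ))) *
        L (fun l => c0UnitVector (t l))) :
    (∑' α : {α : ℕ →₀ ℕ //
          (α.sum fun _ k => k) = n + 1 ∧ α.support.card ≤ M},
        (‖cP α.1‖₊ : ENNReal) ^ ((2 * ((n : ℝ) + 1)) / ((n : ℝ) + 2)))
        ^ (((n : ℝ) + 2) / (2 * ((n : ℝ) + 1)))
      ≤ ENNReal.ofReal (Real.exp 1 * 2 ^ ((M : ℝ) / 2) *
          ((n : ℝ) + 1) ^ (((M : ℝ) + 1) / 2) *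
          ⨆ z ∈ {z : ZeroAtInftyContinuousMap ℕ ℂ | ‖z‖ ≤ 1},
            ‖L fun _ => z‖) := by
  have hC (z : ZeroAtInftyContinuousMap ℕ ℂ) (hz : ‖z‖ ≤ 1) := norm_map_const_le_iSup L hz
  set C := ⨆ z ∈ {z : ZeroAtInftyContinuousMap ℕ ℂ | ‖z‖ ≤ 1}, ‖L fun _ => z‖
  have C_nonneg : 0 ≤ C := (norm_nonneg _).trans (hC 0 (by simp))
  have multinomial_ne_zero (α : ℕ →₀ ℕ) : (α.multinomial : ℂ) ≠ 0 :=
    mod_cast (Nat.multinomial_pos ..).ne'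
  have L_unitVectors (t : Fin (n + 1) → ℕ) :
      L (c0UnitVector ∘ t) = cP (multiIndex t) / (multiIndex t).multinomial := by
    rw [hcP _ t fun r => (multiIndex_apply t r).symm,
      factorial_div_prod_factorial_eq_multinomial (degree_multiIndex t),
      mul_div_cancel_left₀ _ (multinomial_ne_zero _)]
    rfl
  rw [← inv_div (2 * ((n : ℝ) + 1))]
  refine tsum_nnnorm_rpow_rpow_inv_le (by positivity) (by positivity) fun s => ?_
  calc ∑ α ∈ s, ‖cP α.1‖ ^ (2 * ((n : ℝ) + 1) / (n + 2))
      = ∑ α ∈ s.map (.subtype _), ‖α.multinomial * (cP α / α.multinomial)‖ ^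
          (2 * ((n : ℝ) + 1) / (n + 2)) := by
        simp only [mul_div_cancel₀ _ (multinomial_ne_zero _), sum_map,
          Function.Embedding.subtype_apply]
    _ ≤ (√((n + 1) * (2 * n) ^ M) * (Real.exp 1 * C)) ^ (2 * ((n : ℝ) + 1) / (n + 2)) :=
        sum_norm_coeff_rpow_le (Nat.one_le_iff_ne_zero.1 hn) M hsym hC
          (fun S u hu => norm_sum_smul_c0UnitVector_le S fun k hk => (hu k hk).le) L_unitVectors
          fun α hα => by obtain ⟨β, -, rfl⟩ := mem_map.1 hα; exact β.2
    _ ≤ _ := Real.rpow_le_rpow (by positivity) (by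
        linarith [mul_le_mul_of_nonneg_right (sqrt_add_one_mul_two_mul_pow_le n.cast_nonneg M)
          (by positivity : 0 ≤ Real.exp 1 * C)]) (by positivity)
end
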